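/- arXiv:1308.5276 — 2 statements merged into one kernel-verified Lean document; each statement's English description precedes it below -/
import Mathlib

section
/- There is a universal constant C > 0 such that the following holds. Let u_1, ..., u_m be column vectors in ℂ^d such that Σ_{i=1}^m u_i u_i* ≤ I (i.e., I − Σ u_i u_i* is positive semidefinite) and ‖u_i‖² ≤ ε for all i. Suppose 0 ≤ t_i ≤ 1 for 1 ≤ i ≤ m. Then there exists a set of indices S ⊆ {1, ..., m} such that ‖Σ_{i ∈ S} u_i u_i* − Σ_{i=1}^m t_i u_i u_i*‖ ≤ C ε^{1/8}. -/
open ComplexOrder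

/-- The outer product `u u*` of a vector `u ∈ ℂ^d` with itself, as a `d × d` matrix. -/
noncomputable def outer {d : ℕ} (u : EuclideanSpace ℂ (Fin d)) :
    Matrix (Fin d) (Fin d) ℂ :=
  Matrix.of fun i j => u i * starRingEnd ℂ (u j)

/-- The operator norm of a matrix, acting on Euclidean space. -/
noncomputable def opNorm {d : ℕ} (A : Matrix (Fin d) (Fin d) ℂ) : ℝ :=
  ‖Matrix.toEuclideanCLM (𝕜 := ℂ) A‖

/-!
For each index `k` choose whether `k` goes into `S`, and let `f c` be the determinant of
`θ + ∑ₖ cₖ uₖuₖ*` with `θ = 2r + r²`, where `r² = ε`. The sum in question has norm at most `θ` as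
soon as `f` has no zeros above `c` for both `cₖ = 1_S(k) - tₖ` and `cₖ = tₖ - 1_S(k)`: moving
towards a positive definite matrix of the pencil, a Hermitian matrix with a negative eigenvalue
would have to pass through a singular one. So consider `F x y = f x * f y`, which is real stable;
the choice of `S` amounts to translating `F`, for each `k`, by `1` in one of the two coordinates
`xₖ`, `yₖ`, that is, to applying `1 - ∂` in that coordinate. Choosing one of the two coordinates
with weights `tₖ`, `1 - tₖ` replaces `1 - ∂` by `1 - ∂ᵥ` for an average direction `v`, and the
barrier argument of Marcus, Spielman and Srivastava bounds the region without zeros of the averaged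
function. An interlacing argument shows that some choice is as good as the average; it needs only
the Rayleigh inequalities `p ∂ᵢ∂ⱼp ≤ ∂ᵢp ∂ⱼp` of real stable multiaffine functions.
-/

namespace AkemannWeaver

section Multiaffine

variable {ι K : Type*} [DecidableEq ι] [CommRing K]

/-- The unit forward difference in the coordinate `i`, as a linear operator on functions of the
coordinates. On multiaffine functions it is the partial derivative `∂ᵢ`, and it is only used
there: this encoding avoids both polynomials and differentiability. -/
def partialDiff (i : ι) : Module.End K ((ι → K) → K) where
  toFun := fwdDiff (Pi.single i 1)
  map_add' := fwdDiff_add _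
  map_smul' := fwdDiff_const_smul _

theorem partialDiff_apply (i : ι) (p : (ι → K) → K) (x : ι → K) :
    partialDiff i p x = p (x + Pi.single i 1) - p x := rfl

theorem partialDiff_commute (i j : ι) :
    Commute (partialDiff i : Module.End K ((ι → K) → K)) (partialDiff j) := by
  ext p x
  simp only [Module.End.mul_apply, partialDiff_apply, add_right_comm x (Pi.single i 1)]
  ring

variable (ι K) in
/-- The functions that are affine in each coordinate separately. -/
def multiaffine : Submodule K ((ι → K) → K) where
  carrier := {p | ∀ i x w, p (x + Pi.single i w) = p x + w * partialDiff i p x}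
  add_mem' hp hq i x w := by
    simp only [Pi.add_apply, map_add, hp i x w, hq i x w]
    ring
  zero_mem' := by simp
  smul_mem' a p hp i x w := by
    simp only [Pi.smul_apply, map_smul, smul_eq_mul, hp i x w]
    ring

variable {p : (ι → K) → K}

theorem partialDiff_mem_multiaffine (hp : p ∈ multiaffine ι K) (j : ι) :
    partialDiff j p ∈ multiaffine ι K := by
  intro i x w
  rw [← Module.End.mul_apply, (partialDiff_commute i j).eq, Module.End.mul_apply]
  simp only [partialDiff_apply j]
  rw [add_right_comm, hp i (x + _) w, hp i x w]
  ring

theorem partialDiff_partialDiff_self (hp : p ∈ multiaffine ι K) (i : ι) :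
    partialDiff i (partialDiff i p) = 0 := by
  funext x
  have h := hp i x (1 + 1)
  rw [Pi.single_add, ← add_assoc] at h
  simp only [partialDiff_apply, Pi.zero_apply] at h ⊢
  rw [h]
  ring

theorem continuous_of_mem_multiaffine [Finite ι] [TopologicalSpace K] [IsTopologicalRing K]
    (hp : p ∈ multiaffine ι K) : Continuous p := by
  cases nonempty_fintype ι
  have key (s : Finset ι) : ∀ q ∈ multiaffine ι K,
      Continuous fun x : ι → K => q (∑ i ∈ s, Pi.single i (x i)) := by
    induction s using Finset.induction_on with
    | empty => exact fun q _ => by simpa using continuous_const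
    | insert i s hi ih =>
      intro q hq
      simp only [Finset.sum_insert hi, add_comm (Pi.single i _), hq i]
      exact (ih q hq).add ((continuous_apply i).mul (ih _ (partialDiff_mem_multiaffine hq i)))
  simpa only [Finset.univ_sum_single] using key Finset.univ p hp

variable [Fintype ι]

/-- The operator `∂ᵥ = ∑ᵢ vᵢ ∂ᵢ`, depending linearly on the direction `v`; on multiaffine functions
it is the directional derivative. -/
def dirDiff : (ι → K) →ₗ[K] Module.End K ((ι → K) → K) :=
  Fintype.linearCombination K partialDiff

theorem dirDiff_apply (v : ι → K) (p : (ι → K) → K) (x : ι → K) :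
    dirDiff v p x = ∑ i, v i * partialDiff i p x := by
  simp [dirDiff, Fintype.linearCombination_apply, LinearMap.sum_apply]

theorem dirDiff_single (i : ι) (a : K) : dirDiff (Pi.single i a) = a • partialDiff i :=
  Fintype.linearCombination_apply_single ..

theorem dirDiff_commute (u v : ι → K) : Commute (dirDiff u) (dirDiff v) := by
  simp only [dirDiff, Fintype.linearCombination_apply]
  exact Commute.sum_left _ _ _ fun i _ => Commute.sum_right _ _ _ fun j _ =>
    ((partialDiff_commute i j).smul_left _).smul_right _

theorem dirDiff_mem_multiaffine (hp : p ∈ multiaffine ι K) (v : ι → K) :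
    dirDiff v p ∈ multiaffine ι K := by
  simp only [dirDiff, Fintype.linearCombination_apply, LinearMap.sum_apply, LinearMap.smul_apply]
  exact Submodule.sum_mem _ fun i _ =>
    Submodule.smul_mem _ _ (partialDiff_mem_multiaffine hp i)

/-- The operator `1 - ∂ᵥ`. Applied in the directions `v₁, …, vₘ`, it takes the mixed characteristic
polynomial out of a determinantal polynomial. -/
def oneSubDiff (v : ι → K) : Module.End K ((ι → K) → K) := 1 - dirDiff v

theorem oneSubDiff_apply (v : ι → K) (p : (ι → K) → K) (x : ι → K) :
    oneSubDiff v p x = p x - dirDiff v p x := rfl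

theorem oneSubDiff_commute (u v : ι → K) : Commute (oneSubDiff u) (oneSubDiff v) :=
  ((Commute.one_left _).sub_left ((Commute.one_right _).sub_right (dirDiff_commute u v)))

theorem oneSubDiff_mem_multiaffine (hp : p ∈ multiaffine ι K) (v : ι → K) :
    oneSubDiff v p ∈ multiaffine ι K :=
  Submodule.sub_mem _ hp (dirDiff_mem_multiaffine hp v)

theorem oneSubDiff_single_one_apply (hp : p ∈ multiaffine ι K) (i : ι) (x : ι → K) :
    oneSubDiff (Pi.single i 1) p x = p (x - Pi.single i 1) := by
  rw [oneSubDiff_apply, dirDiff_single, one_smul, sub_eq_add_neg x, ← Pi.single_neg, hp]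
  ring

variable {κ : Type*}

/-- The composition of the operators `1 - ∂ᵥ` for the directions `v k`, where `k` runs through the
list `l`. -/
def prodOneSubDiff (v : κ → ι → K) (l : List κ) : Module.End K ((ι → K) → K) :=
  (l.map fun k => oneSubDiff (v k)).prod

theorem prodOneSubDiff_nil_apply (v : κ → ι → K) (p : (ι → K) → K) :
    prodOneSubDiff v [] p = p := rfl

theorem prodOneSubDiff_cons_apply (v : κ → ι → K) (k : κ) (l : List κ) (p : (ι → K) → K) :
    prodOneSubDiff v (k :: l) p = oneSubDiff (v k) (prodOneSubDiff v l p) := rfl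

theorem prodOneSubDiff_oneSubDiff (v : κ → ι → K) (l : List κ) (c : ι → K) (p : (ι → K) → K) :
    prodOneSubDiff v l (oneSubDiff c p) = oneSubDiff c (prodOneSubDiff v l p) := by
  have hcomm : Commute (prodOneSubDiff v l) (oneSubDiff c) :=
    Commute.list_prod_left _ _ fun T hT => by
      obtain ⟨k, -, rfl⟩ := List.mem_map.1 hT
      exact oneSubDiff_commute _ _
  exact LinearMap.congr_fun hcomm.eq p

theorem prodOneSubDiff_single_one_apply (hp : p ∈ multiaffine ι K) (c : κ → ι) (l : List κ)
    (x : ι → K) :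
    prodOneSubDiff (fun k => Pi.single (c k) 1) l p x =
      p (x - (l.map fun k => Pi.single (c k) 1).sum) := by
  induction l generalizing p with
  | nil => simp only [prodOneSubDiff_nil_apply, List.map_nil, List.sum_nil, sub_zero]
  | cons k l ih =>
    rw [prodOneSubDiff_cons_apply, ← prodOneSubDiff_oneSubDiff,
      ih (oneSubDiff_mem_multiaffine hp _), oneSubDiff_single_one_apply hp, List.map_cons,
      List.sum_cons, sub_sub, add_comm]

end Multiaffine

section TwoCoordinates

variable {ι K : Type*} [Fintype ι] [DecidableEq ι] [CommRing K] {p : (ι → K) → K}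

theorem apply_add_smul_pair (hp : p ∈ multiaffine ι K) (i j : ι) (a b s : K) (x : ι → K) :
    p (x + s • (Pi.single i a + Pi.single j b)) =
      p x + dirDiff (Pi.single i a + Pi.single j b) p x * s +
        a * b * partialDiff i (partialDiff j p) x * s ^ 2 := by
  simp only [smul_add, ← Pi.single_smul, smul_eq_mul, ← add_assoc, map_add, dirDiff_single,
    LinearMap.add_apply, LinearMap.smul_apply, Pi.add_apply, Pi.smul_apply]
  rw [hp, hp, partialDiff_mem_multiaffine hp j i]
  ring

theorem dirDiff_add_smul_pair (hp : p ∈ multiaffine ι K) (i j : ι) (a b s : K) (x : ι → K) :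
    dirDiff (Pi.single i a + Pi.single j b) p (x + s • (Pi.single i a + Pi.single j b)) =
      dirDiff (Pi.single i a + Pi.single j b) p x +
        2 * (a * b * partialDiff i (partialDiff j p) x) * s := by
  have hcomm : partialDiff j (partialDiff i p) = partialDiff i (partialDiff j p) :=
    LinearMap.congr_fun (partialDiff_commute j i).eq p
  have hij := partialDiff_mem_multiaffine (partialDiff_mem_multiaffine hp j) i
  simp only [smul_add, ← Pi.single_smul, smul_eq_mul, ← add_assoc, map_add, dirDiff_single,
    LinearMap.add_apply, LinearMap.smul_apply, Pi.add_apply, Pi.smul_apply]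
  rw [partialDiff_mem_multiaffine hp i j, partialDiff_mem_multiaffine hp i i,
    partialDiff_mem_multiaffine hp j j, partialDiff_mem_multiaffine hp j i,
    partialDiff_partialDiff_self hp, partialDiff_partialDiff_self hp, hcomm, hij,
    partialDiff_partialDiff_self (partialDiff_mem_multiaffine hp j)]
  simp only [Pi.zero_apply]
  ring

end TwoCoordinates

section Stability

open ComplexConjugate

variable {ι : Type*} [DecidableEq ι]

/-- A multiaffine function on `ℂ^ι` is *stable* if it has no zeros in the product of open upper
half-planes. -/
structure IsStable (P : (ι → ℂ) → ℂ) : Prop where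
  mem_multiaffine : P ∈ multiaffine ι ℂ
  ne_zero : ∀ z, (∀ i, 0 < (z i).im) → P z ≠ 0

namespace IsStable

variable {P : (ι → ℂ) → ℂ} {z : ι → ℂ}

theorem partialDiff_eq_zero_or_im_div_neg (hP : IsStable P) (hz : ∀ i, 0 < (z i).im) (i : ι) :
    partialDiff i P z = 0 ∨ (partialDiff i P z / P z).im < 0 := by
  refine or_iff_not_imp_left.2 fun h0 => ?_
  by_contra! him
  -- Otherwise `w = -P z / ∂ᵢP z` has `0 ≤ w.im`, and `P` vanishes at `z + w eᵢ`.
  have hw : 0 ≤ (-(partialDiff i P z / P z)⁻¹).im := by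
    rw [Complex.neg_im, Complex.inv_im, neg_div, neg_neg]
    exact div_nonneg him (Complex.normSq_nonneg _)
  refine hP.ne_zero (z + Pi.single i (-(partialDiff i P z / P z)⁻¹)) (fun j => ?_) ?_
  · obtain rfl | hj := eq_or_ne j i
    · simpa only [Pi.add_apply, Pi.single_eq_same, Complex.add_im] using
        add_pos_of_pos_of_nonneg (hz j) hw
    · simpa only [Pi.add_apply, Pi.single_eq_of_ne hj, add_zero] using hz j
  · rw [hP.mem_multiaffine, inv_div, neg_mul, div_mul_cancel₀ _ h0, add_neg_cancel]

theorem im_partialDiff_div_nonpos (hP : IsStable P) (hz : ∀ i, 0 < (z i).im) (i : ι) :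
    (partialDiff i P z / P z).im ≤ 0 :=
  (hP.partialDiff_eq_zero_or_im_div_neg hz i).elim (fun h => by simp [h]) le_of_lt

theorem im_partialDiff_mul_conj_nonpos [Finite ι] (hP : IsStable P) (hz : ∀ i, 0 ≤ (z i).im)
    (i : ι) : (partialDiff i P z * conj (P z)).im ≤ 0 := by
  have hopen (y : ι → ℂ) (hy : ∀ i, 0 < (y i).im) : (partialDiff i P y * conj (P y)).im ≤ 0 := by
    have hP0 := hP.ne_zero y hy
    have h : partialDiff i P y * conj (P y) =
        (Complex.normSq (P y) : ℂ) * (partialDiff i P y / P y) := by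
      rw [Complex.normSq_eq_conj_mul_self]
      field_simp
    rw [h, Complex.im_ofReal_mul]
    exact mul_nonpos_of_nonneg_of_nonpos (Complex.normSq_nonneg _)
      (hP.im_partialDiff_div_nonpos hy i)
  have hline : Continuous fun (η : ℝ) k => z k + η * Complex.I := by fun_prop
  have hcont := Complex.continuous_im.comp <|
    ((continuous_of_mem_multiaffine (partialDiff_mem_multiaffine hP.mem_multiaffine i)).comp
      hline).mul <| Complex.continuous_conj.comp <|
        (continuous_of_mem_multiaffine hP.mem_multiaffine).comp hline
  have hlim := (hcont.tendsto 0).mono_left (nhdsWithin_le_nhds (s := Set.Ioi (0 : ℝ)))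
  simpa using le_of_tendsto hlim <| Filter.eventually_of_mem self_mem_nhdsWithin
    fun η (hη : 0 < η) => hopen _ fun k => by simpa using add_pos_of_nonneg_of_pos (hz k) hη

protected theorem oneSubDiff [Fintype ι] (hP : IsStable P) {v : ι → ℝ} (hv : 0 ≤ v) :
    IsStable (oneSubDiff (fun i => (v i : ℂ)) P) where
  mem_multiaffine := oneSubDiff_mem_multiaffine hP.mem_multiaffine _
  ne_zero z hz h0 := by
    have hone : (1 : ℂ) = ∑ i, (v i : ℂ) * (partialDiff i P z / P z) := by
      rw [oneSubDiff_apply, dirDiff_apply, sub_eq_zero] at h0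
      simp_rw [← mul_div_assoc, ← Finset.sum_div, ← h0, div_self (hP.ne_zero z hz)]
    have hle (i : ι) : v i * (partialDiff i P z / P z).im ≤ 0 :=
      mul_nonpos_of_nonneg_of_nonpos (hv i) (hP.im_partialDiff_div_nonpos hz i)
    have him : ∑ i, v i * (partialDiff i P z / P z).im = 0 := by
      simpa only [Complex.im_sum, Complex.im_ofReal_mul, Complex.one_im, eq_comm] using
        congrArg Complex.im hone
    refine one_ne_zero (hone.trans (Finset.sum_eq_zero fun i _ => ?_))
    have hi := (Finset.sum_eq_zero_iff_of_nonpos fun i _ => hle i).1 him i (Finset.mem_univ i)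
    rcases mul_eq_zero.1 hi with hvi | hi
    · rw [hvi, Complex.ofReal_zero, zero_mul]
    · rcases hP.partialDiff_eq_zero_or_im_div_neg hz i with h | h
      · rw [h, zero_div, mul_zero]
      · exact absurd hi h.ne

end IsStable

/-- A function on `ℝ^ι` is *real stable* if it is the restriction of a stable function. -/
def IsRealStable (p : (ι → ℝ) → ℝ) : Prop :=
  ∃ P : (ι → ℂ) → ℂ, IsStable P ∧ ∀ x : ι → ℝ, P (fun i => (x i : ℂ)) = p x

theorem ofReal_add_single (x : ι → ℝ) (i : ι) (w : ℝ) :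
    (fun j => ((x + Pi.single i w : ι → ℝ) j : ℂ)) =
      (fun j => (x j : ℂ)) + Pi.single i (w : ℂ) := by
  funext j
  obtain rfl | hj := eq_or_ne j i
  · simp
  · simp [hj]

theorem partialDiff_ofReal {P : (ι → ℂ) → ℂ} {p : (ι → ℝ) → ℝ}
    (h : ∀ x : ι → ℝ, P (fun i => (x i : ℂ)) = p x) (i : ι) (x : ι → ℝ) :
    partialDiff i P (fun j => (x j : ℂ)) = partialDiff i p x := by
  rw [partialDiff_apply, partialDiff_apply, ← Complex.ofReal_one, ← ofReal_add_single, h, h,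
    Complex.ofReal_sub]

/-- Multiaffine functions satisfying the Rayleigh inequality `p ∂ᵢ∂ⱼp ≤ ∂ᵢp ∂ⱼp`, which says that
`log p` has nonpositive second derivatives wherever `p` is positive. -/
structure IsStronglyRayleigh (p : (ι → ℝ) → ℝ) : Prop where
  mem_multiaffine : p ∈ multiaffine ι ℝ
  mul_le_mul : ∀ i j x,
    p x * partialDiff i (partialDiff j p) x ≤ partialDiff i p x * partialDiff j p x

namespace IsRealStable

variable {p : (ι → ℝ) → ℝ}

theorem mem_multiaffine (hp : IsRealStable p) : p ∈ multiaffine ι ℝ := by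
  obtain ⟨P, hP, hPp⟩ := hp
  intro i x w
  have h := hP.mem_multiaffine i (fun j => (x j : ℂ)) w
  rw [← ofReal_add_single, hPp, hPp, partialDiff_ofReal hPp] at h
  exact_mod_cast h

theorem isStronglyRayleigh [Finite ι] (hp : IsRealStable p) : IsStronglyRayleigh p := by
  refine ⟨hp.mem_multiaffine, fun i j x => ?_⟩
  obtain ⟨P, hP, hPp⟩ := hp
  -- The Rayleigh inequality is `Im (∂ⱼP * conj P) ≤ 0` at the boundary point `x + √-1 eᵢ`.
  have h := hP.im_partialDiff_mul_conj_nonpos (i := j)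
    (z := (fun k => (x k : ℂ)) + Pi.single i Complex.I) fun k => by
      obtain rfl | hk := eq_or_ne k i
      · simp
      · simp [hk]
  rw [hP.mem_multiaffine, partialDiff_mem_multiaffine hP.mem_multiaffine j,
    partialDiff_ofReal (partialDiff_ofReal hPp j), partialDiff_ofReal hPp,
    partialDiff_ofReal hPp, hPp] at h
  simp only [map_add, map_mul, Complex.conj_ofReal, Complex.conj_I, Complex.mul_im, Complex.add_re,
    Complex.add_im, Complex.mul_re, Complex.ofReal_re, Complex.ofReal_im, Complex.I_re,
    Complex.I_im, Complex.neg_re, Complex.neg_im] at h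
  linarith

protected theorem oneSubDiff [Fintype ι] (hp : IsRealStable p) {v : ι → ℝ} (hv : 0 ≤ v) :
    IsRealStable (oneSubDiff v p) := by
  obtain ⟨P, hP, hPp⟩ := hp
  refine ⟨_, hP.oneSubDiff hv, fun x => ?_⟩
  rw [oneSubDiff_apply, oneSubDiff_apply, dirDiff_apply, dirDiff_apply, hPp]
  simp only [partialDiff_ofReal hPp]
  push_cast
  rfl

protected theorem prodOneSubDiff [Fintype ι] {κ : Type*} (hp : IsRealStable p)
    {v : κ → ι → ℝ} (hv : ∀ k, 0 ≤ v k) (l : List κ) : IsRealStable (prodOneSubDiff v l p) := by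
  induction l with
  | nil => exact hp
  | cons k l ih => exact ih.oneSubDiff (hv k)

end IsRealStable

end Stability

section QuadraticRatio

theorem leadingCoeff_nonneg_of_forall_pos {a b c s₀ : ℝ}
    (h : ∀ s, s₀ ≤ s → 0 < a + b * s + c * s ^ 2) : 0 ≤ c := by
  have hlim : Filter.Tendsto (fun s : ℝ => a * s⁻¹ ^ 2 + b * s⁻¹ + c) Filter.atTop
      (nhds (a * 0 ^ 2 + b * 0 + c)) :=
    (((tendsto_inv_atTop_zero.pow 2).const_mul a).add
      (tendsto_inv_atTop_zero.const_mul b)).add_const c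
  rw [zero_pow two_ne_zero, mul_zero, mul_zero, zero_add, zero_add] at hlim
  refine ge_of_tendsto hlim ?_
  filter_upwards [Filter.eventually_ge_atTop s₀, Filter.eventually_gt_atTop 0] with s hs hs0
  have hsplit : a * s⁻¹ ^ 2 + b * s⁻¹ + c = (a + b * s + c * s ^ 2) / s ^ 2 := by
    field_simp
  rw [hsplit]
  exact (div_pos (h s hs) (pow_pos hs0 2)).le

variable {f₀ f₁ f₂ h₀ h₁ h₂ V E δ : ℝ}

-- If `0 < E`, the discriminant of `hq` is `≤ 0`, which says `f₀ E² ≤ V (f₁ E - f₂ V)`, i.e. that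
-- `f₀ + f₁ s + f₂ s²` is nonpositive at `s = -V / E`; hence `-V / E` lies to the left of `-δ`.
theorem mul_le_mul_of_forall_quadratic_nonneg
    (hpos : ∀ s, -δ ≤ s → 0 < f₀ + f₁ * s + f₂ * s ^ 2) (hδ : 0 ≤ δ) (hslope : 0 ≤ f₁ - δ * f₂)
    (hV : 0 ≤ V) (hq : ∀ s, 0 ≤ V * (f₀ - f₂ * s ^ 2) + E * (2 * f₀ * s + f₁ * s ^ 2)) :
    f₀ * E ≤ V * (f₁ - δ * f₂) := by
  have hf₀ : 0 < f₀ := by simpa using hpos 0 (neg_nonpos.2 hδ)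
  have hf₂ := leadingCoeff_nonneg_of_forall_pos hpos
  rcases le_or_gt E 0 with hE | hE
  · exact (mul_nonpos_of_nonneg_of_nonpos hf₀.le hE).trans (mul_nonneg hV hslope)
  have hdiscrim : f₀ * E ^ 2 ≤ V * (f₁ * E - f₂ * V) := by
    have h := discrim_le_zero (a := f₁ * E - f₂ * V) (b := 2 * f₀ * E) (c := V * f₀) fun s => by
      linarith [hq s]
    rw [discrim] at h
    refine le_of_mul_le_mul_left ?_ (mul_pos four_pos hf₀)
    linarith
  have hδE : δ * E ≤ V := by
    by_contra! h
    have hval := mul_pos (hpos (-(V / E)) (neg_le_neg ((div_le_iff₀ hE).2 h.le))) (pow_pos hE 2)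
    have hexpand : (f₀ + f₁ * -(V / E) + f₂ * (-(V / E)) ^ 2) * E ^ 2 =
        f₀ * E ^ 2 - V * (f₁ * E - f₂ * V) := by
      field_simp
      ring
    linarith
  refine le_of_mul_le_mul_right ?_ hE
  calc f₀ * E * E = f₀ * E ^ 2 := by ring
    _ ≤ V * (f₁ * E - f₂ * V) := hdiscrim
    _ ≤ V * (f₁ * E - f₂ * (δ * E)) := by gcongr
    _ = V * (f₁ - δ * f₂) * E := by ring

-- The graph of `H / F`, where `F s = f₀ + f₁ s + f₂ s²` and `H s = h₀ + h₁ s + h₂ s²`, lies above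
-- its tangent at `0` when evaluated at `-δ`; `hW` says that `H / F` is nonincreasing.
theorem mul_tangent_le_of_quadratic
    (hpos : ∀ s, -δ ≤ s → 0 < f₀ + f₁ * s + f₂ * s ^ 2) (hδ : 0 < δ)
    (hmono : f₀ + f₁ * (-δ) + f₂ * (-δ) ^ 2 ≤ f₀)
    (hW : ∀ s, (f₀ + f₁ * s + f₂ * s ^ 2) * (h₁ + 2 * h₂ * s) ≤
      (h₀ + h₁ * s + h₂ * s ^ 2) * (f₁ + 2 * f₂ * s)) :
    (f₀ + f₁ * (-δ) + f₂ * (-δ) ^ 2) * (h₀ * f₀ + δ * (h₀ * f₁ - h₁ * f₀)) ≤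
      f₀ ^ 2 * (h₀ + h₁ * (-δ) + h₂ * (-δ) ^ 2) := by
  have hf₀ : 0 < f₀ := by simpa using hpos 0 (neg_nonpos.2 hδ.le)
  have hslope : 0 ≤ f₁ - δ * f₂ := by
    refine nonneg_of_mul_nonneg_right (a := δ) ?_ hδ
    linarith
  have hV : 0 ≤ h₀ * f₁ - h₁ * f₀ := by
    have h := hW 0
    simp only [mul_zero, add_zero, zero_pow two_ne_zero] at h
    linarith
  have hconv : f₀ * (h₀ * f₂ - h₂ * f₀) ≤ (h₀ * f₁ - h₁ * f₀) * (f₁ - δ * f₂) :=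
    mul_le_mul_of_forall_quadratic_nonneg hpos hδ.le hslope hV fun s => by
      linarith [mul_le_mul_of_nonneg_left (hW s) hf₀.le]
  linarith [mul_le_mul_of_nonneg_left hconv (sq_nonneg δ)]

-- In the notation of `mul_tangent_le_of_quadratic`, with `D = f₀ - f₁`: the tangent bound at `-δ`
-- controls `(H - H') / (F - F')` at `0`.
theorem mul_sub_le_mul_of_tangent_le {F H : ℝ} (hf₀ : 0 < f₀) (hF : 0 ≤ F) (hD : 0 ≤ f₀ - f₁)
    (hV : 0 ≤ h₀ * f₁ - h₁ * f₀) (hgap : f₀ ≤ δ * (f₀ - f₁))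
    (htangent : F * (h₀ * f₀ + δ * (h₀ * f₁ - h₁ * f₀)) ≤ f₀ ^ 2 * H) :
    (h₀ - h₁) * F ≤ H * (f₀ - f₁) := by
  refine le_of_mul_le_mul_left ?_ (pow_pos hf₀ 2)
  calc f₀ ^ 2 * ((h₀ - h₁) * F)
      = F * (h₀ * f₀ * (f₀ - f₁) + (h₀ * f₁ - h₁ * f₀) * f₀) := by ring
    _ ≤ F * (h₀ * f₀ * (f₀ - f₁) + (h₀ * f₁ - h₁ * f₀) * (δ * (f₀ - f₁))) := by gcongr
    _ = F * (h₀ * f₀ + δ * (h₀ * f₁ - h₁ * f₀)) * (f₀ - f₁) := by ring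
    _ ≤ f₀ ^ 2 * H * (f₀ - f₁) := by gcongr
    _ = f₀ ^ 2 * (H * (f₀ - f₁)) := by ring

end QuadraticRatio

section Barrier

variable {ι : Type*} {p : (ι → ℝ) → ℝ} {z : ι → ℝ}

/-- `z` lies *above the roots* of `p` if `p` is positive on the orthant with apex `z`. -/
def IsAboveRoots (p : (ι → ℝ) → ℝ) (z : ι → ℝ) : Prop :=
  ∀ x, z ≤ x → 0 < p x

theorem IsAboveRoots.mono {y : ι → ℝ} (h : IsAboveRoots p z) (hzy : z ≤ y) : IsAboveRoots p y :=
  fun x hx => h x (hzy.trans hx)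

variable [DecidableEq ι]

theorem IsAboveRoots.partialDiff_nonneg (hz : IsAboveRoots p z) (hp : p ∈ multiaffine ι ℝ)
    (i : ι) :
    0 ≤ partialDiff i p z := by
  by_contra! hneg
  -- Otherwise `p` vanishes at `z - (p z / ∂ᵢp z) eᵢ`.
  refine (hz (z + Pi.single i (-(p z / partialDiff i p z))) ?_).ne' ?_
  · exact le_add_of_nonneg_right
      (Pi.single_nonneg.2 (neg_nonneg.2 (div_nonpos_of_nonneg_of_nonpos (hz z le_rfl).le hneg.le)))
  · rw [hp, neg_mul, div_mul_cancel₀ _ hneg.ne, add_neg_cancel]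

/-- Nonnegative vectors supported on at most two coordinates. -/
def IsPairDirection (v : ι → ℝ) : Prop :=
  ∃ i j a b, 0 ≤ a ∧ 0 ≤ b ∧ v = Pi.single i a + Pi.single j b

theorem IsPairDirection.nonneg {v : ι → ℝ} (hv : IsPairDirection v) : 0 ≤ v := by
  obtain ⟨i, j, a, b, ha, hb, rfl⟩ := hv
  exact add_nonneg (Pi.single_nonneg.2 ha) (Pi.single_nonneg.2 hb)

section Finite

variable [Finite ι]

theorem monotoneOn_Ici_of_le_add_single {α : Type*} [Preorder α] {f : (ι → ℝ) → α}
    (h : ∀ x, z ≤ x → ∀ i w, 0 ≤ w → f x ≤ f (x + Pi.single i w)) :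
    MonotoneOn f (Set.Ici z) := by
  cases nonempty_fintype ι
  intro x hx y _ hxy
  have key (s : Finset ι) : f x ≤ f (x + ∑ i ∈ s, Pi.single i (y i - x i)) := by
    induction s using Finset.induction_on with
    | empty => rw [Finset.sum_empty, add_zero]
    | insert i s hi ih =>
      rw [Finset.sum_insert hi, add_comm (Pi.single i _), ← add_assoc]
      refine ih.trans (h _ ?_ i _ (sub_nonneg.2 (hxy i)))
      exact le_add_of_le_of_nonneg hx
        (Finset.sum_nonneg fun j _ => Pi.single_nonneg.2 (sub_nonneg.2 (hxy j)))
  simpa only [← Pi.sub_apply, Finset.univ_sum_single, add_sub_cancel] using key Finset.univ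

theorem IsAboveRoots.monotoneOn (hz : IsAboveRoots p z) (hp : p ∈ multiaffine ι ℝ) :
    MonotoneOn p (Set.Ici z) :=
  monotoneOn_Ici_of_le_add_single fun x hx i w hw => by
    rw [hp]
    exact le_add_of_nonneg_right (mul_nonneg hw ((hz.mono hx).partialDiff_nonneg hp i))

end Finite

variable [Fintype ι]

/-- The logarithmic derivative `∂ᵥp / p`, the barrier function of Marcus, Spielman and
Srivastava. -/
noncomputable def barrier (v : ι → ℝ) (p : (ι → ℝ) → ℝ) (x : ι → ℝ) : ℝ :=
  dirDiff v p x / p x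

namespace IsStronglyRayleigh

variable {u v x : ι → ℝ}

theorem mul_dirDiff_dirDiff_le (hp : IsStronglyRayleigh p) (hu : 0 ≤ u) (hv : 0 ≤ v) :
    p x * dirDiff u (dirDiff v p) x ≤ dirDiff u p x * dirDiff v p x := by
  have hexpand : dirDiff u (dirDiff v p) x =
      ∑ i, ∑ j, u i * v j * partialDiff i (partialDiff j p) x := by
    simp only [dirDiff_apply, partialDiff_apply _ (dirDiff v p), ← Finset.sum_sub_distrib,
      ← mul_sub, ← partialDiff_apply, Finset.mul_sum, mul_assoc]
  rw [hexpand, dirDiff_apply, dirDiff_apply, Finset.sum_mul_sum, Finset.mul_sum]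
  refine Finset.sum_le_sum fun i _ => ?_
  rw [Finset.mul_sum]
  refine Finset.sum_le_sum fun j _ => ?_
  linarith [mul_le_mul_of_nonneg_left (hp.mul_le_mul i j x) (mul_nonneg (hu i) (hv j))]

theorem antitoneOn_barrier (hp : IsStronglyRayleigh p) (hz : IsAboveRoots p z) (hv : 0 ≤ v) :
    AntitoneOn (barrier v p) (Set.Ici z) := by
  refine monotoneOn_Ici_of_le_add_single (α := ℝᵒᵈ) fun x hx i w hw => ?_
  have hxw : z ≤ x + Pi.single i w := le_add_of_le_of_nonneg hx (Pi.single_nonneg.2 hw)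
  change barrier v p (x + Pi.single i w) ≤ barrier v p x
  rw [barrier, barrier, div_le_div_iff₀ (hz _ hxw) (hz x hx), hp.mem_multiaffine,
    dirDiff_mem_multiaffine hp.mem_multiaffine]
  have hR := hp.mul_dirDiff_dirDiff_le (x := x) (Pi.single_nonneg (i := i).2 zero_le_one) hv
  rw [dirDiff_single, one_smul] at hR
  linarith [mul_le_mul_of_nonneg_left hR hw]

theorem isAboveRoots_oneSubDiff (hp : IsStronglyRayleigh p) (hz : IsAboveRoots p z) (hv : 0 ≤ v)
    (hbarrier : barrier v p z < 1) : IsAboveRoots (oneSubDiff v p) z := by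
  intro x hx
  have h : barrier v p x < 1 :=
    (hp.antitoneOn_barrier hz hv Set.self_mem_Ici hx hx).trans_lt hbarrier
  rwa [barrier, div_lt_one (hz x hx), ← sub_pos] at h

end IsStronglyRayleigh

-- Along a pair direction, `p` and `∂ᵤp` are quadratic, and the barrier function is convex.
theorem IsStronglyRayleigh.mul_barrier_tangent_le {u v : ι → ℝ} {δ : ℝ} (hp : IsStronglyRayleigh p)
    (hz : IsAboveRoots p z) (hu : 0 ≤ u) (hv : IsPairDirection v) (hδ : 0 < δ) :
    p z * (dirDiff u p (z + δ • v) * p (z + δ • v) +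
        δ * (dirDiff u p (z + δ • v) * dirDiff v p (z + δ • v) -
          dirDiff v (dirDiff u p) (z + δ • v) * p (z + δ • v))) ≤
      p (z + δ • v) ^ 2 * dirDiff u p z := by
  have hv0 := hv.nonneg
  have hmem := dirDiff_mem_multiaffine hp.mem_multiaffine u
  have hback : z + δ • v + (-δ) • v = z := by rw [neg_smul, add_neg_cancel_right]
  have hpos (s : ℝ) (hs : -δ ≤ s) : 0 < p (z + δ • v + s • v) := by
    refine hz _ ?_
    rw [add_assoc, ← add_smul]
    exact le_add_of_nonneg_right (smul_nonneg (by linarith) hv0)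
  have hmono : p (z + δ • v + (-δ) • v) ≤ p (z + δ • v) := by
    have hle : z ≤ z + δ • v := le_add_of_nonneg_right (smul_nonneg hδ.le hv0)
    rw [hback]
    exact hz.monotoneOn hp.mem_multiaffine Set.self_mem_Ici hle hle
  have hW (s : ℝ) :=
    (hp.mul_dirDiff_dirDiff_le (x := z + δ • v + s • v) hv0 hu).trans_eq (mul_comm _ _)
  generalize z + δ • v = y at *
  obtain ⟨i, j, a, b, -, -, rfl⟩ := hv
  have key := mul_tangent_le_of_quadratic (δ := δ)
    (fun s hs => by simpa only [apply_add_smul_pair hp.mem_multiaffine] using hpos s hs) hδ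
    (by simpa only [apply_add_smul_pair hp.mem_multiaffine] using hmono)
    (fun s => by
      simpa only [apply_add_smul_pair hp.mem_multiaffine, apply_add_smul_pair hmem,
        dirDiff_add_smul_pair hp.mem_multiaffine, dirDiff_add_smul_pair hmem] using hW s)
  rwa [← apply_add_smul_pair hp.mem_multiaffine, ← apply_add_smul_pair hmem, hback] at key

theorem IsStronglyRayleigh.barrier_oneSubDiff_le {u v : ι → ℝ} {δ : ℝ} (hp : IsStronglyRayleigh p)
    (hz : IsAboveRoots p z) (hu : 0 ≤ u) (hv : IsPairDirection v) (hδ : 0 < δ)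
    (hbarrier : barrier v p z ≤ 1 - 1 / δ) :
    barrier u (oneSubDiff v p) (z + δ • v) ≤ barrier u p z := by
  have hle : z ≤ z + δ • v := le_add_of_nonneg_right (smul_nonneg hδ.le hv.nonneg)
  have hpos := hz _ hle
  have hgap : p (z + δ • v) ≤ δ * (p (z + δ • v) - dirDiff v p (z + δ • v)) := by
    have h := (hp.antitoneOn_barrier hz hv.nonneg Set.self_mem_Ici hle hle).trans hbarrier
    rw [barrier, div_le_iff₀ hpos] at h
    have h' := mul_le_mul_of_nonneg_left h hδ.le
    field_simp at h'
    linarith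
  have hD : 0 < oneSubDiff v p (z + δ • v) :=
    pos_of_mul_pos_right (hpos.trans_le hgap) hδ.le
  have hcomm : dirDiff u (oneSubDiff v p) = oneSubDiff v (dirDiff u p) :=
    LinearMap.congr_fun ((Commute.one_right _).sub_right (dirDiff_commute u v)).eq p
  rw [barrier, barrier, div_le_div_iff₀ hD (hz z le_rfl), hcomm, oneSubDiff_apply, oneSubDiff_apply]
  refine mul_sub_le_mul_of_tangent_le hpos (hz z le_rfl).le hD.le ?_ hgap
    (hp.mul_barrier_tangent_le hz hu hv hδ)
  linarith [hp.mul_dirDiff_dirDiff_le (x := z + δ • v) hv.nonneg hu]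

end Barrier

section IteratedBarrier

variable {ι κ : Type*} [Fintype ι] [DecidableEq ι] {p : (ι → ℝ) → ℝ} {z : ι → ℝ}

theorem IsRealStable.isAboveRoots_prodOneSubDiff_and_barrier_le {v : κ → ι → ℝ} {δ : ℝ}
    (hp : IsRealStable p) (hz : IsAboveRoots p z) (hv : ∀ k, IsPairDirection (v k)) (hδ : 0 < δ)
    (hbarrier : ∀ k, barrier (v k) p z ≤ 1 - 1 / δ) (l : List κ) :
    IsAboveRoots (prodOneSubDiff v l p) (z + δ • (l.map v).sum) ∧
      ∀ u, 0 ≤ u → barrier u (prodOneSubDiff v l p) (z + δ • (l.map v).sum) ≤ barrier u p z := by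
  induction l with
  | nil => simpa [prodOneSubDiff_nil_apply] using hz
  | cons k l ih =>
    obtain ⟨habove, hle⟩ := ih
    have hg := (hp.prodOneSubDiff (fun k => (hv k).nonneg) l).isStronglyRayleigh
    have hk := (hle (v k) (hv k).nonneg).trans (hbarrier k)
    have hk1 := hk.trans_lt (sub_lt_self 1 (one_div_pos.2 hδ))
    rw [List.map_cons, List.sum_cons, add_comm (v k), smul_add, ← add_assoc,
      prodOneSubDiff_cons_apply]
    exact ⟨(hg.isAboveRoots_oneSubDiff habove (hv k).nonneg hk1).mono
        (le_add_of_nonneg_right (smul_nonneg hδ.le (hv k).nonneg)),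
      fun u hu => (hg.barrier_oneSubDiff_le habove hu (hv k) hδ hk).trans (hle u hu)⟩

theorem IsStronglyRayleigh.isAboveRoots_oneSubDiff_of_oneSubDiff {u v : ι → ℝ}
    (hp : IsStronglyRayleigh p) (hu : 0 ≤ u) (hv : 0 ≤ v) (hz : IsAboveRoots p z)
    (hvz : IsAboveRoots (oneSubDiff v p) z)
    (huvz : IsAboveRoots (oneSubDiff u (oneSubDiff v p)) z) :
    IsAboveRoots (oneSubDiff u p) z := by
  intro x hx
  have hle : p x * oneSubDiff u (oneSubDiff v p) x ≤ oneSubDiff u p x * oneSubDiff v p x := by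
    have hexpand : oneSubDiff u (oneSubDiff v p) x =
        p x - dirDiff v p x - (dirDiff u p x - dirDiff u (dirDiff v p) x) := by
      rw [oneSubDiff_apply u, oneSubDiff, LinearMap.sub_apply, map_sub]
      rfl
    rw [hexpand, oneSubDiff_apply, oneSubDiff_apply]
    linarith [hp.mul_dirDiff_dirDiff_le (x := x) hu hv]
  exact pos_of_mul_pos_left ((mul_pos (hz x hx) (huvz x hx)).trans_le hle) (hvz x hx).le

theorem IsRealStable.isAboveRoots_prodOneSubDiff_oneSubDiff {v : κ → ι → ℝ} {c : ι → ℝ}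
    (hp : IsRealStable p) (hv : ∀ k, 0 ≤ v k) (hc : 0 ≤ c) {l : List κ}
    (hz : ∀ l', l' <:+ l → IsAboveRoots (prodOneSubDiff v l' p) z)
    (hcz : IsAboveRoots (oneSubDiff c (prodOneSubDiff v l p)) z) (l' : List κ)
    (hl' : l' <:+ l) : IsAboveRoots (prodOneSubDiff v l' (oneSubDiff c p)) z := by
  rw [prodOneSubDiff_oneSubDiff]
  induction l with
  | nil => rwa [List.suffix_nil.1 hl']
  | cons k l ih =>
    obtain rfl | hl' := List.suffix_cons_iff.1 hl'
    · exact hcz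
    · exact ih (fun l' hl => hz l' (hl.trans (List.suffix_cons k l)))
        ((hp.prodOneSubDiff hv l).isStronglyRayleigh.isAboveRoots_oneSubDiff_of_oneSubDiff hc (hv k)
          (hz l (List.suffix_cons k l)) (hz _ List.suffix_rfl) hcz) hl'

end IteratedBarrier

section Choice

variable {κ β : Type*} [Fintype β] [DecidableEq κ] [DecidableEq β]

/-- The part of `w` supported on the fiber over `k`. -/
def fiberDir (w : κ × β → ℝ) (k : κ) : κ × β → ℝ :=
  ∑ b, Pi.single (k, b) (w (k, b))

variable {w : κ × β → ℝ}

theorem fiberDir_nonneg (hw : 0 ≤ w) (k : κ) : 0 ≤ fiberDir w k :=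
  Finset.sum_nonneg fun b _ => Pi.single_nonneg.2 (hw (k, b))

theorem isPairDirection_fiberDir {w : κ × Bool → ℝ} (hw : 0 ≤ w) (k : κ) :
    IsPairDirection (fiberDir w k) :=
  ⟨_, _, _, _, hw _, hw _, Fintype.sum_bool _⟩

variable [Fintype κ]

theorem sum_fiberDir (w : κ × β → ℝ) : ∑ k, fiberDir w k = w :=
  (Fintype.sum_prod_type fun i : κ × β => (Pi.single i (w i) : κ × β → ℝ)).symm.trans
    (Finset.univ_sum_single w)

theorem barrier_fiberDir (w : κ × β → ℝ) (k : κ) (p : (κ × β → ℝ) → ℝ) (x : κ × β → ℝ) :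
    barrier (fiberDir w k) p x = ∑ b, w (k, b) * (partialDiff (k, b) p x / p x) := by
  simp only [barrier, fiberDir, map_sum, dirDiff_single, LinearMap.sum_apply, LinearMap.smul_apply,
    Finset.sum_apply, Pi.smul_apply, smul_eq_mul, Finset.sum_div, mul_div_assoc]

variable {p : (κ × β → ℝ) → ℝ} {z : κ × β → ℝ}

theorem IsStronglyRayleigh.exists_isAboveRoots_oneSubDiff_single (hp : IsStronglyRayleigh p)
    (hw : 0 ≤ w) {k : κ} (hw1 : ∑ b, w (k, b) = 1) (hz : IsAboveRoots p z)
    (hkz : IsAboveRoots (oneSubDiff (fiberDir w k) p) z) :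
    ∃ b, IsAboveRoots (oneSubDiff (Pi.single (k, b) 1) p) z := by
  have hlt : ∑ b, w (k, b) * (partialDiff (k, b) p z / p z) < ∑ b, w (k, b) * 1 := by
    rw [← barrier_fiberDir, ← Finset.sum_mul, hw1, one_mul, barrier, div_lt_one (hz z le_rfl)]
    exact sub_pos.1 (hkz z le_rfl)
  obtain ⟨b, -, hb⟩ := Finset.exists_lt_of_sum_lt hlt
  refine ⟨b, hp.isAboveRoots_oneSubDiff hz (Pi.single_nonneg.2 zero_le_one) ?_⟩
  rw [barrier, dirDiff_single, one_smul]
  exact lt_of_mul_lt_mul_left hb (hw (k, b))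

theorem IsRealStable.exists_isAboveRoots_prodOneSubDiff_single (hp : IsRealStable p) (hw : 0 ≤ w)
    (hw1 : ∀ k, ∑ b, w (k, b) = 1) {l : List κ} (hl : l.Nodup)
    (hz : ∀ l', l' <:+ l → IsAboveRoots (prodOneSubDiff (fiberDir w) l' p) z) :
    ∃ s : κ → β, IsAboveRoots (prodOneSubDiff (fun k => Pi.single (k, s k) 1) l p) z := by
  induction l generalizing p with
  | nil =>
    have hβ (k : κ) : Nonempty β := by
      by_contra! h
      simpa using hw1 k
    exact ⟨fun k => (hβ k).some, hz [] List.suffix_rfl⟩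
  | cons k l ih =>
    have hv (k : κ) := fiberDir_nonneg hw k
    have hzl (l' : List κ) (hl' : l' <:+ l) := hz l' (hl'.trans (List.suffix_cons k l))
    have hg := (hp.prodOneSubDiff hv l).isStronglyRayleigh
    obtain ⟨b, hb⟩ := hg.exists_isAboveRoots_oneSubDiff_single hw (hw1 k)
      (hzl l List.suffix_rfl) (hz _ List.suffix_rfl)
    have hb0 : (0 : κ × β → ℝ) ≤ Pi.single (k, b) 1 := Pi.single_nonneg.2 zero_le_one
    obtain ⟨s, hs⟩ := ih (hp.oneSubDiff hb0) hl.of_cons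
      (hp.isAboveRoots_prodOneSubDiff_oneSubDiff hv hb0 hzl hb)
    refine ⟨Function.update s k b, ?_⟩
    have hupdate : prodOneSubDiff (fun j => Pi.single (j, Function.update s k b j) (1 : ℝ)) l =
        prodOneSubDiff (fun j => Pi.single (j, s j) 1) l := by
      refine congrArg List.prod (List.map_congr_left fun j hj => ?_)
      simp only [Function.update_of_ne (ne_of_mem_of_not_mem hj hl.notMem)]
    rwa [prodOneSubDiff_cons_apply, Function.update_self, hupdate, ← prodOneSubDiff_oneSubDiff]

theorem IsRealStable.exists_isAboveRoots_sub_sum_single {p : (κ × Bool → ℝ) → ℝ}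
    {w y : κ × Bool → ℝ} {δ : ℝ} (hp : IsRealStable p) (hw : 0 ≤ w)
    (hw1 : ∀ k, ∑ b, w (k, b) = 1) (hδ : 0 < δ) (hz : IsAboveRoots p (y - δ • w))
    (hbarrier : ∀ k, barrier (fiberDir w k) p (y - δ • w) ≤ 1 - 1 / δ) :
    ∃ s : κ → Bool, IsAboveRoots p (y - ∑ k, Pi.single (k, s k) 1) := by
  have hsuffix (l : List κ) (hl : l <:+ Finset.univ.toList) :
      IsAboveRoots (prodOneSubDiff (fiberDir w) l p) y := by
    refine (hp.isAboveRoots_prodOneSubDiff_and_barrier_le hz (isPairDirection_fiberDir hw) hδ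
      hbarrier l).1.mono ?_
    have hsum : (l.map (fiberDir w)).sum ≤ w := by
      refine ((hl.sublist.map _).sum_le_sum fun v hv => ?_).trans_eq ?_
      · obtain ⟨k, -, rfl⟩ := List.mem_map.1 hv
        exact fiberDir_nonneg hw k
      · rw [Finset.sum_map_toList, sum_fiberDir]
    rw [sub_add, sub_le_self_iff, sub_nonneg]
    exact smul_le_smul_of_nonneg_left hsum hδ.le
  obtain ⟨s, hs⟩ := hp.exists_isAboveRoots_prodOneSubDiff_single hw hw1 (Finset.nodup_toList _)
    hsuffix
  refine ⟨s, fun x hx => ?_⟩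
  have h := hs (x + ∑ k, Pi.single (k, s k) 1) (sub_le_iff_le_add.1 hx)
  rwa [prodOneSubDiff_single_one_apply hp.mem_multiaffine, Finset.sum_map_toList,
    add_sub_cancel_right] at h

end Choice

section FiberProd

variable {κ β K : Type*} [Fintype β] [CommRing K]

/-- The product of copies of `f`, one for each `b`, in separate variables `x (k, b)`. -/
def fiberProd (f : (κ → K) → K) (x : κ × β → K) : K :=
  ∏ b, f fun k => x (k, b)

theorem IsAboveRoots.fiberProd {f : (κ → ℝ) → ℝ} {z : κ × β → ℝ}
    (hz : ∀ b, IsAboveRoots f fun k => z (k, b)) : IsAboveRoots (fiberProd f) z :=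
  fun _ hx => Finset.prod_pos fun b _ => hz b _ fun k => hx (k, b)

theorem ne_zero_of_isAboveRoots_fiberProd {f : (κ → ℝ) → ℝ} {z : κ × β → ℝ}
    (hz : IsAboveRoots (fiberProd f) z) {b : β} {c : κ → ℝ} (hc : ∀ k, z (k, b) ≤ c k) :
    f c ≠ 0 := by
  classical
  have h := hz (fun i => if i.2 = b then c i.1 else z i) fun i => by
    obtain ⟨k, b'⟩ := i
    dsimp only
    split_ifs with hb
    · exact hb ▸ hc k
    · exact le_rfl
  simpa using Finset.prod_ne_zero_iff.1 h.ne' b (Finset.mem_univ b)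

variable [DecidableEq κ] [DecidableEq β]

theorem fiberProd_add_single (f : (κ → K) → K) (x : κ × β → K) (k : κ) (b : β) (w : K) :
    fiberProd f (x + Pi.single (k, b) w) =
      f ((fun j => x (j, b)) + Pi.single k w) *
        ∏ b' ∈ Finset.univ.erase b, f fun j => x (j, b') := by
  rw [fiberProd, ← Finset.mul_prod_erase _ _ (Finset.mem_univ b)]
  congr 1
  · congr 1
    funext j
    obtain rfl | hj := eq_or_ne j k
    · simp
    · simp [hj]
  · refine Finset.prod_congr rfl fun b' hb' => ?_
    simp [Finset.ne_of_mem_erase hb']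

theorem partialDiff_fiberProd (f : (κ → K) → K) (x : κ × β → K) (k : κ) (b : β) :
    partialDiff (k, b) (fiberProd f) x =
      partialDiff k f (fun j => x (j, b)) * ∏ b' ∈ Finset.univ.erase b, f fun j => x (j, b') := by
  rw [partialDiff_apply, fiberProd_add_single, fiberProd,
    ← Finset.mul_prod_erase _ _ (Finset.mem_univ b), ← sub_mul, partialDiff_apply]

theorem fiberProd_mem_multiaffine {f : (κ → K) → K} (hf : f ∈ multiaffine κ K) :
    fiberProd f ∈ multiaffine (κ × β) K := by
  rintro ⟨k, b⟩ x w
  rw [fiberProd_add_single, partialDiff_fiberProd, hf, fiberProd,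
    ← Finset.mul_prod_erase _ _ (Finset.mem_univ b)]
  ring

theorem IsRealStable.fiberProd {f : (κ → ℝ) → ℝ} (hf : IsRealStable f) :
    IsRealStable (fiberProd (β := β) f) := by
  obtain ⟨P, hP, hPf⟩ := hf
  refine ⟨AkemannWeaver.fiberProd P, ⟨fiberProd_mem_multiaffine hP.mem_multiaffine,
    fun z hz => Finset.prod_ne_zero_iff.2 fun b _ => hP.ne_zero _ fun k => hz (k, b)⟩, fun x => ?_⟩
  simp only [AkemannWeaver.fiberProd, hPf, Complex.ofReal_prod]

theorem partialDiff_fiberProd_div {f : (κ → ℝ) → ℝ} {x : κ × β → ℝ}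
    (hx : ∀ b, f (fun j => x (j, b)) ≠ 0) (k : κ) (b : β) :
    partialDiff (k, b) (fiberProd f) x / fiberProd f x =
      partialDiff k f (fun j => x (j, b)) / f fun j => x (j, b) := by
  rw [partialDiff_fiberProd, fiberProd, ← Finset.mul_prod_erase _ _ (Finset.mem_univ b)]
  exact mul_div_mul_right _ _ (Finset.prod_ne_zero_iff.2 fun b' _ => hx b')

variable [Fintype κ]

theorem barrier_fiberDir_fiberProd_le {f : (κ → ℝ) → ℝ} {w x : κ × β → ℝ} {C : ℝ} {k : κ}
    (hw : 0 ≤ w) (hw1 : ∑ b, w (k, b) = 1) (hx : ∀ b, f (fun j => x (j, b)) ≠ 0)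
    (hf : ∀ b, barrier (Pi.single k 1) f (fun j => x (j, b)) ≤ C) :
    barrier (fiberDir w k) (fiberProd f) x ≤ C := by
  rw [barrier_fiberDir]
  calc ∑ b, w (k, b) * (partialDiff (k, b) (fiberProd f) x / fiberProd f x)
      ≤ ∑ b, w (k, b) * C := by
        refine Finset.sum_le_sum fun b _ => mul_le_mul_of_nonneg_left ?_ (hw (k, b))
        rw [partialDiff_fiberProd_div hx]
        simpa only [barrier, dirDiff_single, one_smul] using hf b
    _ = C := by rw [← Finset.sum_mul, hw1, one_mul]

theorem barrier_single_one_le_of_nonneg {f : (κ → ℝ) → ℝ} (hf : f ∈ multiaffine κ ℝ) {x : κ → ℝ}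
    (hx : 0 < f x) {C : ℝ} (hC : 0 < C) {k : κ} (h : 0 ≤ f (x - Pi.single k C⁻¹)) :
    barrier (Pi.single k 1) f x ≤ C := by
  rw [sub_eq_add_neg, ← Pi.single_neg, hf, neg_mul, ← sub_eq_add_neg, sub_nonneg,
    inv_mul_le_iff₀ hC] at h
  rwa [barrier, dirDiff_single, one_smul, div_le_iff₀ hx]

theorem IsRealStable.exists_forall_ne_zero {f : (κ → ℝ) → ℝ} (hf : IsRealStable f) {r : ℝ}
    (hr : 0 < r) (hpos : IsAboveRoots f fun _ => -r)
    (hbarrier : ∀ k, barrier (Pi.single k 1) f (fun _ => -r) ≤ 1 - 1 / (1 + r)) {t : κ → ℝ}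
    (ht0 : ∀ k, 0 ≤ t k) (ht1 : ∀ k, t k ≤ 1) :
    ∃ S : Finset κ, ∀ c,
      (∀ k, t k - (if k ∈ S then 1 else 0) ≤ c k) ∨ (∀ k, (if k ∈ S then 1 else 0) - t k ≤ c k) →
        f c ≠ 0 := by
  let w : κ × Bool → ℝ := fun i => bif i.2 then t i.1 else 1 - t i.1
  have hw : 0 ≤ w := by
    rintro ⟨k, _ | _⟩
    exacts [sub_nonneg.2 (ht1 k), ht0 k]
  have hw1 (k : κ) : ∑ b, w (k, b) = 1 := by simp [w]
  have hwr (b : Bool) : (fun _ => -r) ≤ fun k => (w - (1 + r) • w) (k, b) := by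
    intro k
    have hle : w (k, b) ≤ 1 := by
      rw [← hw1 k]
      exact Finset.single_le_sum (f := fun b => w (k, b)) (fun b _ => hw (k, b)) (Finset.mem_univ b)
    simp only [Pi.sub_apply, Pi.smul_apply, smul_eq_mul]
    linarith [mul_le_mul_of_nonneg_left hle hr.le]
  have habove (b : Bool) := hpos.mono (hwr b)
  obtain ⟨s, hs⟩ := hf.fiberProd.exists_isAboveRoots_sub_sum_single (δ := 1 + r) hw hw1
    (by positivity) (IsAboveRoots.fiberProd habove) fun k =>
      barrier_fiberDir_fiberProd_le hw (hw1 k) (fun b => (habove b _ le_rfl).ne') fun b =>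
        (hf.isStronglyRayleigh.antitoneOn_barrier hpos (Pi.single_nonneg.2 zero_le_one)
          Set.self_mem_Ici (hwr b) (hwr b)).trans (hbarrier k)
  have hval (k : κ) (b : Bool) : (w - ∑ j, Pi.single (j, s j) 1 : κ × Bool → ℝ) (k, b) =
      w (k, b) - if b = s k then 1 else 0 := by
    simp [Pi.single_apply, ite_and]
  refine ⟨Finset.univ.filter fun k => s k = true, fun c hc => ?_⟩
  simp only [Finset.mem_filter, Finset.mem_univ, true_and] at hc
  rcases hc with hc | hc
  · refine ne_zero_of_isAboveRoots_fiberProd hs (b := true) fun k => (hc k).trans' ?_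
    rw [hval]
    cases s k <;> simp [w]
  · refine ne_zero_of_isAboveRoots_fiberProd hs (b := false) fun k => (hc k).trans' ?_
    rw [hval]
    cases s k <;> simp [w]

end FiberProd

section Matrices

open Matrix

variable {n : Type*} [Fintype n]

variable {𝕜 : Type*} [RCLike 𝕜]

theorem star_dotProduct_self_eq_norm_sq (x : EuclideanSpace 𝕜 n) :
    star (x : n → 𝕜) ⬝ᵥ x = ((‖x‖ ^ 2 : ℝ) : 𝕜) := by
  rw [dotProduct_comm, ← EuclideanSpace.inner_eq_star_dotProduct, inner_self_eq_norm_sq_to_K,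
    RCLike.ofReal_pow]

variable [DecidableEq n]

theorem det_add_smul_vecMulVec {R : Type*} [CommRing R] (B : Matrix n n R) (u v : n → R) (w : R) :
    (B + w • vecMulVec u v).det = B.det + w * ((B + vecMulVec u v).det - B.det) := by
  let M : Matrix (Unit ⊕ n) (Unit ⊕ n) R := fromBlocks 1 0 (replicateCol Unit u) B
  let r₀ : Unit ⊕ n → R := Sum.elim 1 0
  let r₁ : Unit ⊕ n → R := Sum.elim 0 (-v)
  have key (w : R) : (B + w • vecMulVec u v).det =
      (M.updateRow (Sum.inl ()) r₀).det + w * (M.updateRow (Sum.inl ()) r₁).det := by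
    have hM : M.updateRow (Sum.inl ()) (r₀ + w • r₁) =
        fromBlocks 1 (replicateRow Unit (-(w • v))) (replicateCol Unit u) B := by
      ext (i | i) (j | j) <;> simp [M, r₀, r₁, updateRow_apply]
    rw [← det_updateRow_smul, ← det_updateRow_add, hM, det_fromBlocks_one₁₁]
    congr 1
    ext i j
    simp only [Matrix.add_apply, Matrix.smul_apply, Matrix.sub_apply, vecMulVec_apply, mul_apply,
      replicateCol_apply, replicateRow_apply, Finset.univ_unique, Finset.sum_singleton,
      Pi.neg_apply, Pi.smul_apply, smul_eq_mul]
    ring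
  have h₀ := key 0
  have h₁ := key 1
  simp only [zero_smul, add_zero, zero_mul, one_smul, one_mul] at h₀ h₁
  rw [key, h₁, h₀]
  ring

open scoped MatrixOrder Matrix.Norms.L2Operator in
theorem posSemidef_of_forall_det_add_smul_ne_zero {H C : Matrix n n 𝕜} (hH : H.IsHermitian)
    (hC : C.PosDef) (h : ∀ a : ℝ, 0 < a → (H + a • C).det ≠ 0) : H.PosSemidef := by
  obtain ⟨P, hP, rfl⟩ :=
    CStarAlgebra.isStrictlyPositive_iff_eq_star_mul_self.mp hC.isStrictlyPositive
  have hPinv : P⁻¹ * P = 1 := nonsing_inv_mul P ((isUnit_iff_isUnit_det P).mp hP)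
  obtain ⟨K, hK, rfl⟩ : ∃ K, K.IsHermitian ∧ H = star P * K * P := by
    refine ⟨star P⁻¹ * H * P⁻¹, isHermitian_conjTranspose_mul_mul _ hH, ?_⟩
    calc H = star (P⁻¹ * P) * H * (P⁻¹ * P) := by rw [hPinv, star_one, one_mul, mul_one]
      _ = star P * (star P⁻¹ * H * P⁻¹) * P := by simp only [star_mul, mul_assoc]
  rw [hP.posSemidef_star_left_conjugate_iff, hK.posSemidef_iff_eigenvalues_nonneg]
  intro i
  by_contra! hi
  have hfactor : star P * K * P + (-hK.eigenvalues i) • (star P * P) =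
      star P * -(algebraMap ℝ _ (hK.eigenvalues i) - K) * P := by
    rw [Algebra.algebraMap_eq_smul_one]
    simp only [neg_sub, mul_sub, sub_mul, mul_smul_comm, smul_mul_assoc, mul_one, neg_smul,
      ← sub_eq_add_neg]
  have hsing : ¬IsUnit (algebraMap ℝ _ (hK.eigenvalues i) - K) :=
    hK.eigenvalues_mem_spectrum_real i
  have hdet := h (-hK.eigenvalues i) (neg_pos.mpr hi)
  rw [hfactor, det_mul, det_mul] at hdet
  refine hsing (IsUnit.neg_iff _ |>.mp ?_)
  exact (isUnit_iff_isUnit_det _).mpr (right_ne_zero_of_mul (left_ne_zero_of_mul hdet)).isUnit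

theorem posSemidef_norm_sq_smul_one_sub_vecMulVec (u : EuclideanSpace 𝕜 n) :
    (‖u‖ ^ 2 • (1 : Matrix n n 𝕜) - vecMulVec u (star (u : n → 𝕜))).PosSemidef := by
  refine .of_dotProduct_mulVec_nonneg ?_ fun y => ?_
  · exact (isHermitian_one.smul (.all _)).sub (posSemidef_vecMulVec_self_star _).isHermitian
  let Y : EuclideanSpace 𝕜 n := WithLp.toLp 2 y
  have hrank : star y ⬝ᵥ vecMulVec u (star (u : n → 𝕜)) *ᵥ y =
      ((‖inner 𝕜 u Y‖ ^ 2 : ℝ) : 𝕜) := by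
    rw [vecMulVec_mulVec, RCLike.ofReal_pow, ← RCLike.conj_mul, inner_conj_symm,
      EuclideanSpace.inner_eq_star_dotProduct, EuclideanSpace.inner_eq_star_dotProduct]
    simp [Y, dotProduct_comm, mul_comm]
  have hone : star y ⬝ᵥ y = ((‖Y‖ ^ 2 : ℝ) : 𝕜) := star_dotProduct_self_eq_norm_sq Y
  rw [sub_mulVec, smul_mulVec, one_mulVec, dotProduct_sub, dotProduct_smul, hrank, hone,
    RCLike.real_smul_ofReal, ← RCLike.ofReal_mul, ← RCLike.ofReal_sub, RCLike.ofReal_nonneg,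
    sub_nonneg, ← mul_pow]
  exact pow_le_pow_left₀ (norm_nonneg _) (norm_inner_le_norm u Y) 2

theorem norm_toEuclideanCLM_le {X : Matrix n n 𝕜} {θ : ℝ} (hθ : 0 ≤ θ)
    (h₁ : (θ • 1 - X).PosSemidef) (h₂ : (θ • 1 + X).PosSemidef) :
    ‖toEuclideanCLM (𝕜 := 𝕜) X‖ ≤ θ := by
  have hX : X.IsHermitian := by
    simpa using h₂.isHermitian.sub (isHermitian_one.smul (.all θ))
  set T := toEuclideanCLM (𝕜 := 𝕜) X with hT
  have hsymm : T.IsSymmetric := by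
    rw [hT, coe_toEuclideanCLM_eq_toEuclideanLin]
    exact isSymmetric_toEuclideanLin_iff.mpr hX
  rw [T.norm_eq_iSup_rayleighQuotient hsymm]
  refine ciSup_le fun x => ?_
  have hinner : T.reApplyInnerSelf x = RCLike.re (star (x : n → 𝕜) ⬝ᵥ X *ᵥ x) := by
    rw [T.reApplyInnerSelf_apply, ← inner_re_symm, EuclideanSpace.inner_eq_star_dotProduct, hT,
      ofLp_toEuclideanCLM, dotProduct_comm]
  have h₁x := h₁.re_dotProduct_nonneg x
  have h₂x := h₂.re_dotProduct_nonneg x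
  simp only [sub_mulVec, add_mulVec, dotProduct_sub, dotProduct_add, smul_mulVec, one_mulVec,
    dotProduct_smul, map_sub, map_add, star_dotProduct_self_eq_norm_sq, ← hinner, RCLike.smul_re,
    RCLike.ofReal_re] at h₁x h₂x
  rw [ContinuousLinearMap.rayleighQuotient, abs_div, abs_of_nonneg (sq_nonneg ‖x‖)]
  refine div_le_of_le_mul₀ (sq_nonneg _) hθ (abs_le.mpr ⟨?_, ?_⟩) <;> linarith

end Matrices

section RankOnePencil

open Matrix

variable {ι n : Type*} [Fintype ι]

/-- The matrix pencil `A₀ + ∑ᵢ cᵢ vᵢvᵢ*`, for real or complex parameters `c`. -/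
def rankOnePencil {K : Type*} [SMul K ℂ] (A₀ : Matrix n n ℂ) (v : ι → n → ℂ) (c : ι → K) :
    Matrix n n ℂ :=
  A₀ + ∑ i, c i • vecMulVec (v i) (star (v i))

variable {A₀ : Matrix n n ℂ} {v : ι → n → ℂ}

theorem rankOnePencil_ofReal (A₀ : Matrix n n ℂ) (v : ι → n → ℂ) (c : ι → ℝ) :
    rankOnePencil A₀ v (fun i => (c i : ℂ)) = rankOnePencil A₀ v c := by
  simp only [rankOnePencil, Complex.coe_smul]

theorem rankOnePencil_add_single [DecidableEq ι] {K : Type*} [Ring K] [Module K ℂ]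
    (A₀ : Matrix n n ℂ) (v : ι → n → ℂ) (c : ι → K) (i : ι) (w : K) :
    rankOnePencil A₀ v (c + Pi.single i w) =
      rankOnePencil A₀ v c + w • vecMulVec (v i) (star (v i)) := by
  simp only [rankOnePencil, Pi.add_apply, add_smul, Finset.sum_add_distrib, add_assoc]
  rw [Fintype.sum_eq_single (f := fun j => Pi.single (M := fun _ => K) i w j • _) i
    fun j hj => by rw [Pi.single_eq_of_ne hj, zero_smul], Pi.single_eq_same]

theorem isHermitian_rankOnePencil [Finite n] (hA₀ : A₀.IsHermitian) (v : ι → n → ℂ) (c : ι → ℝ) :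
    (rankOnePencil A₀ v c).IsHermitian :=
  hA₀.add <| isSelfAdjoint_sum _ fun i _ =>
    (posSemidef_vecMulVec_self_star (v i)).isHermitian.smul (.all (c i))

theorem posSemidef_sum_smul_vecMulVec [Finite n] (v : ι → n → ℂ) {c : ι → ℝ} (hc : 0 ≤ c) :
    (∑ i, c i • vecMulVec (v i) (star (v i))).PosSemidef :=
  posSemidef_sum _ fun i _ => (posSemidef_vecMulVec_self_star (v i)).smul (hc i)

theorem rankOnePencil_eq_add_sum_sub (A₀ : Matrix n n ℂ) (v : ι → n → ℂ) (c d : ι → ℝ) :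
    rankOnePencil A₀ v d =
      rankOnePencil A₀ v c + ∑ i, (d - c) i • vecMulVec (v i) (star (v i)) := by
  simp only [rankOnePencil, Pi.sub_apply, sub_smul, Finset.sum_sub_distrib]
  abel

theorem posDef_rankOnePencil_of_le [Finite n] {c d : ι → ℝ}
    (h : (rankOnePencil A₀ v c).PosDef) (hcd : c ≤ d) : (rankOnePencil A₀ v d).PosDef := by
  rw [rankOnePencil_eq_add_sum_sub A₀ v c d]
  exact h.add_posSemidef (posSemidef_sum_smul_vecMulVec v (sub_nonneg.mpr hcd))

variable [Fintype n]

theorem star_dotProduct_rankOnePencil_mulVec (A₀ : Matrix n n ℂ) (v : ι → n → ℂ) (c : ι → ℂ)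
    (y : n → ℂ) :
    star y ⬝ᵥ rankOnePencil A₀ v c *ᵥ y =
      star y ⬝ᵥ A₀ *ᵥ y + ∑ i, c i * (Complex.normSq (star (v i) ⬝ᵥ y) : ℂ) := by
  rw [rankOnePencil, add_mulVec, sum_mulVec, dotProduct_add, dotProduct_sum]
  congr! 2 with i
  rw [smul_mulVec, vecMulVec_mulVec, dotProduct_smul, dotProduct_smul, smul_eq_mul, op_smul_eq_mul,
    star_dotProduct y, Complex.normSq_eq_conj_mul_self]
  rfl

variable [DecidableEq n]

theorem det_rankOnePencil_ne_zero (hA₀ : A₀.PosDef) {c : ι → ℂ} (hc : ∀ i, 0 < (c i).im) :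
    (rankOnePencil A₀ v c).det ≠ 0 := by
  intro hdet
  obtain ⟨y, hy, hker⟩ := exists_mulVec_eq_zero_iff.mpr hdet
  have hform := star_dotProduct_rankOnePencil_mulVec A₀ v c y
  have hpos := hA₀.dotProduct_mulVec_pos hy
  rw [hker, dotProduct_zero] at hform
  have him : ∑ i, (c i).im * Complex.normSq (star (v i) ⬝ᵥ y) = 0 := by
    simpa [(Complex.pos_iff.mp hpos).2.symm] using (congrArg Complex.im hform).symm
  have hzero (i : ι) : Complex.normSq (star (v i) ⬝ᵥ y) = 0 := by
    have := (Finset.sum_eq_zero_iff_of_nonneg fun i _ =>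
      mul_nonneg (hc i).le (Complex.normSq_nonneg _)).mp him i (Finset.mem_univ i)
    exact (mul_eq_zero.mp this).resolve_left (hc i).ne'
  simp only [hzero, Complex.ofReal_zero, mul_zero, Finset.sum_const_zero, add_zero] at hform
  exact hpos.ne hform

/-- The determinant of `rankOnePencil` at real parameters. The real part is taken only to get a
real-valued function: if `A₀` is Hermitian, then so is the pencil, and its determinant is real. -/
noncomputable def pencilDet (A₀ : Matrix n n ℂ) (v : ι → n → ℂ) (c : ι → ℝ) : ℝ :=
  (rankOnePencil A₀ v c).det.re

theorem ofReal_pencilDet (hA₀ : A₀.IsHermitian) (v : ι → n → ℂ) (c : ι → ℝ) :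
    (pencilDet A₀ v c : ℂ) = (rankOnePencil A₀ v c).det := by
  rw [pencilDet, (isHermitian_rankOnePencil hA₀ v c).det_eq_prod_eigenvalues]
  norm_cast

theorem isRealStable_pencilDet [DecidableEq ι] (hA₀ : A₀.PosDef) (v : ι → n → ℂ) :
    IsRealStable (pencilDet A₀ v) := by
  refine ⟨fun c => (rankOnePencil A₀ v c).det, ⟨fun i c w => ?_, fun c hc => ?_⟩, fun c => ?_⟩
  · simp only [partialDiff_apply, rankOnePencil_add_single, one_smul]
    exact det_add_smul_vecMulVec ..
  · exact det_rankOnePencil_ne_zero hA₀ hc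
  · exact (congrArg det (rankOnePencil_ofReal A₀ v c)).trans
      (ofReal_pencilDet hA₀.isHermitian v c).symm

theorem isAboveRoots_pencilDet {c : ι → ℝ} (h : (rankOnePencil A₀ v c).PosDef) :
    IsAboveRoots (pencilDet A₀ v) c := fun _ hcd =>
  (Complex.pos_iff.mp (posDef_rankOnePencil_of_le h hcd).det_pos).1

theorem posSemidef_rankOnePencil_of_pencilDet_ne_zero (hA₀ : A₀.PosDef) {c : ι → ℝ}
    (h : ∀ d, c ≤ d → pencilDet A₀ v d ≠ 0) : (rankOnePencil A₀ v c).PosSemidef := by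
  have habs : (rankOnePencil A₀ v |c|).PosDef :=
    hA₀.add_posSemidef (posSemidef_sum_smul_vecMulVec v (abs_nonneg c))
  refine posSemidef_of_forall_det_add_smul_ne_zero
    (isHermitian_rankOnePencil hA₀.isHermitian v c) habs fun a ha => ?_
  have ha1 : 0 < 1 + a := by positivity
  set d : ι → ℝ := (1 + a)⁻¹ • (c + a • |c|) with hd
  have hcd : c ≤ d := by
    intro i
    have := mul_le_mul_of_nonneg_left (le_abs_self (c i)) ha.le
    simp only [hd, Pi.smul_apply, Pi.add_apply, Pi.abs_apply, smul_eq_mul]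
    rw [le_inv_mul_iff₀ ha1]
    linarith
  have hscale : rankOnePencil A₀ v c + a • rankOnePencil A₀ v |c| =
      (1 + a) • rankOnePencil A₀ v d := by
    simp only [rankOnePencil, hd, smul_add, Finset.smul_sum, smul_smul, Pi.smul_apply,
      Pi.add_apply, smul_eq_mul, mul_assoc, mul_inv_cancel_left₀ ha1.ne', add_smul,
      Finset.sum_add_distrib, one_smul]
    abel
  rw [hscale, ← Complex.coe_smul, det_smul, ← ofReal_pencilDet hA₀.isHermitian]
  exact mul_ne_zero (pow_ne_zero _ (mod_cast ha1.ne')) (mod_cast h d hcd)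

end RankOnePencil

section Paving

open Matrix

variable {ι n : Type*} [Fintype ι] [DecidableEq n] {u : ι → EuclideanSpace ℂ n} {r : ℝ}

theorem posDef_rankOnePencil_neg [Finite n]
    (hu : (1 - ∑ i, vecMulVec (u i) (star (u i : n → ℂ))).PosSemidef) (hr : 0 < r) :
    (rankOnePencil ((2 * r + r ^ 2) • 1) (fun i => (u i : n → ℂ)) fun _ => -r).PosDef := by
  have h : rankOnePencil ((2 * r + r ^ 2) • 1) (fun i => (u i : n → ℂ)) (fun _ => -r) =
      (r * (1 + r)) • 1 + r • (1 - ∑ i, vecMulVec (u i) (star (u i : n → ℂ))) := by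
    rw [rankOnePencil, ← Finset.smul_sum]
    module
  rw [h]
  exact (PosDef.one.smul (by positivity)).add_posSemidef (hu.smul hr.le)

variable [Fintype n]

theorem barrier_pencilDet_le [DecidableEq ι]
    (hu : (1 - ∑ i, vecMulVec (u i) (star (u i : n → ℂ))).PosSemidef)
    (hr : 0 < r) {k : ι} (hk : ‖u k‖ ≤ r) :
    barrier (Pi.single k 1) (pencilDet ((2 * r + r ^ 2) • 1) fun i => (u i : n → ℂ))
      (fun _ => -r) ≤ 1 - 1 / (1 + r) := by
  set v : ι → n → ℂ := fun i => u i
  have hpos := posDef_rankOnePencil_neg hu hr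
  -- With `θ = 2r + r²`, the value `1 - 1 / (1 + r)` is exactly `r² / (θ - r)`.
  have hC : 1 - 1 / (1 + r) = (r⁻¹ * (1 + r))⁻¹ := by
    field_simp
    ring
  rw [hC]
  refine barrier_single_one_le_of_nonneg
    (isRealStable_pencilDet (PosDef.one.smul (by positivity)) v).mem_multiaffine
    (isAboveRoots_pencilDet hpos _ le_rfl) (by positivity) ?_
  have h : rankOnePencil ((2 * r + r ^ 2) • 1) v
        ((fun _ => -r) - Pi.single k (r⁻¹ * (1 + r))⁻¹⁻¹) =
      (r⁻¹ * (1 + r)) • ((r ^ 2 - ‖u k‖ ^ 2) • 1 +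
        (‖u k‖ ^ 2 • 1 - vecMulVec (u k) (star (u k : n → ℂ)))) +
      r • (1 - ∑ i, vecMulVec (u i) (star (u i : n → ℂ))) := by
    have hcoeff : r⁻¹ * (1 + r) * r ^ 2 = r + r ^ 2 := by field_simp
    rw [inv_inv, sub_eq_add_neg, ← Pi.single_neg, rankOnePencil_add_single, rankOnePencil,
      ← Finset.smul_sum]
    linear_combination (norm := module) (-hcoeff) • (1 : Matrix n n ℂ)
  have hpsd : (rankOnePencil ((2 * r + r ^ 2) • 1) v
      ((fun _ => -r) - Pi.single k (r⁻¹ * (1 + r))⁻¹⁻¹)).PosSemidef := by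
    rw [h]
    have hk2 : 0 ≤ r ^ 2 - ‖u k‖ ^ 2 := sub_nonneg.mpr (pow_le_pow_left₀ (norm_nonneg _) hk 2)
    exact (((PosSemidef.one.smul hk2).add (posSemidef_norm_sq_smul_one_sub_vecMulVec (u k))).smul
      (by positivity)).add (hu.smul hr.le)
  exact (Complex.nonneg_iff.mp hpsd.det_nonneg).1

theorem exists_norm_sum_sub_sum_le
    (hu : (1 - ∑ i, vecMulVec (u i) (star (u i : n → ℂ))).PosSemidef) (hr : 0 < r)
    (hur : ∀ i, ‖u i‖ ≤ r) {t : ι → ℝ} (ht0 : ∀ i, 0 ≤ t i) (ht1 : ∀ i, t i ≤ 1) :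
    ∃ S : Finset ι, ‖toEuclideanCLM (𝕜 := ℂ) (∑ i ∈ S, vecMulVec (u i) (star (u i : n → ℂ)) -
      ∑ i, t i • vecMulVec (u i) (star (u i : n → ℂ)))‖ ≤ 2 * r + r ^ 2 := by
  classical
  have hA₀ : ((2 * r + r ^ 2) • (1 : Matrix n n ℂ)).PosDef := PosDef.one.smul (by positivity)
  obtain ⟨S, hS⟩ := (isRealStable_pencilDet hA₀ fun i => (u i : n → ℂ)).exists_forall_ne_zero hr
    (isAboveRoots_pencilDet (posDef_rankOnePencil_neg hu hr))
    (fun k => barrier_pencilDet_le hu hr (hur k)) ht0 ht1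
  have hdiff : ∑ i ∈ S, vecMulVec (u i) (star (u i : n → ℂ)) -
      ∑ i, t i • vecMulVec (u i) (star (u i : n → ℂ)) =
      ∑ i, ((if i ∈ S then 1 else 0) - t i) • vecMulVec (u i) (star (u i : n → ℂ)) := by
    simp [sub_smul, ite_smul]
  refine ⟨S, hdiff ▸ norm_toEuclideanCLM_le (by positivity) ?_ ?_⟩
  · simp only [sub_eq_add_neg _ (Finset.sum _ _), ← Finset.sum_neg_distrib, ← neg_smul, neg_sub]
    exact posSemidef_rankOnePencil_of_pencilDet_ne_zero hA₀ fun d hd => hS d (.inl hd)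
  · exact posSemidef_rankOnePencil_of_pencilDet_ne_zero hA₀ fun d hd => hS d (.inr hd)

theorem norm_sum_smul_le_one
    (hu : (1 - ∑ i, vecMulVec (u i) (star (u i : n → ℂ))).PosSemidef) {t : ι → ℝ}
    (ht0 : ∀ i, 0 ≤ t i) (ht1 : ∀ i, t i ≤ 1) :
    ‖toEuclideanCLM (𝕜 := ℂ) (∑ i, t i • vecMulVec (u i) (star (u i : n → ℂ)))‖ ≤ 1 := by
  have h1 := posSemidef_sum_smul_vecMulVec (fun i => (u i : n → ℂ)) (c := t) ht0
  have h2 := posSemidef_sum_smul_vecMulVec (fun i => (u i : n → ℂ)) (c := 1 - t)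
    (sub_nonneg.mpr ht1)
  refine norm_toEuclideanCLM_le zero_le_one ?_ ?_
  · have h : (1 : ℝ) • 1 - ∑ i, t i • vecMulVec (u i) (star (u i : n → ℂ)) =
        (1 - ∑ i, vecMulVec (u i) (star (u i : n → ℂ))) +
          ∑ i, (1 - t) i • vecMulVec (u i) (star (u i : n → ℂ)) := by
      simp [sub_smul]
    rw [h]
    exact hu.add h2
  · rw [one_smul]
    exact PosSemidef.one.add h1

end Paving

theorem min_one_three_mul_sqrt_le (ε : ℝ) : min 1 (3 * √ε) ≤ 3 * ε ^ ((1 : ℝ) / 8) := by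
  rcases le_or_gt ε 0 with h0 | h0
  · have : 0 ≤ ε ^ ((1 : ℝ) / 8) := by
      rcases h0.lt_or_eq with h | rfl
      · rw [Real.rpow_def_of_neg h]
        refine mul_nonneg (Real.exp_pos _).le (Real.cos_nonneg_of_mem_Icc ⟨?_, ?_⟩) <;>
        linarith [Real.pi_pos]
      · positivity
    rw [Real.sqrt_eq_zero_of_nonpos h0, mul_zero]
    exact (min_le_right _ _).trans (by positivity)
  rcases le_or_gt 1 ε with h1 | h1
  · have := Real.one_le_rpow h1 (show (0 : ℝ) ≤ 1 / 8 by norm_num)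
    exact (min_le_left _ _).trans (by linarith)
  · rw [Real.sqrt_eq_rpow]
    refine (min_le_right _ _).trans (mul_le_mul_of_nonneg_left ?_ zero_le_three)
    exact Real.rpow_le_rpow_of_exponent_ge h0 h1.le (by norm_num)

end AkemannWeaver

open Matrix in
theorem stmt5_general {ι n : Type*} [Fintype ι] [Fintype n] [DecidableEq n] {ε : ℝ}
    {u : ι → EuclideanSpace ℂ n}
    (hu : (1 - ∑ i, vecMulVec (u i) (star (u i : n → ℂ))).PosSemidef) (huε : ∀ i, ‖u i‖ ^ 2 ≤ ε)
    {t : ι → ℝ} (ht0 : ∀ i, 0 ≤ t i) (ht1 : ∀ i, t i ≤ 1) :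
    ∃ S : Finset ι, ‖toEuclideanCLM (𝕜 := ℂ) (∑ i ∈ S, vecMulVec (u i) (star (u i : n → ℂ)) -
      ∑ i, t i • vecMulVec (u i) (star (u i : n → ℂ)))‖ ≤ min 1 (3 * √ε) := by
  have hur (i : ι) : ‖u i‖ ≤ √ε := Real.le_sqrt_of_sq_le (huε i)
  rcases (Real.sqrt_nonneg ε).eq_or_lt with hr | hr
  · have hzero (i : ι) : u i = 0 := norm_le_zero_iff.mp (hr ▸ hur i)
    exact ⟨∅, by simp [hzero]⟩
  rcases le_or_gt 1 (3 * √ε) with hlarge | hsmall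
  · refine ⟨∅, ?_⟩
    rw [Finset.sum_empty, zero_sub, map_neg, norm_neg, min_eq_left hlarge]
    exact AkemannWeaver.norm_sum_smul_le_one hu ht0 ht1
  · obtain ⟨S, hS⟩ := AkemannWeaver.exists_norm_sum_sub_sum_le hu hr hur ht0 ht1
    refine ⟨S, hS.trans ?_⟩
    rw [min_eq_right hsmall.le]
    nlinarith

/-- **Main theorem.** There is a universal constant `C > 0` such that whenever
`∑ uᵢuᵢ* ≤ I` (i.e. `I - ∑ uᵢuᵢ*` is positive semidefinite), `‖uᵢ‖² ≤ ε` for all `i`,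
and `0 ≤ tᵢ ≤ 1` for all `i`, there is a set of indices `S` with
`‖∑_{i ∈ S} uᵢuᵢ* − ∑ᵢ tᵢ uᵢuᵢ*‖ ≤ C ε^(1/8)`. -/
theorem stmt5 :
    ∃ C : ℝ, 0 < C ∧
      ∀ (d m : ℕ) (ε : ℝ) (u : Fin m → EuclideanSpace ℂ (Fin d)),
        (1 - ∑ i, outer (u i)).PosSemidef →
        (∀ i, ‖u i‖ ^ 2 ≤ ε) →
        ∀ t : Fin m → ℝ, (∀ i, 0 ≤ t i) → (∀ i, t i ≤ 1) →
          ∃ S : Finset (Fin m),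
            opNorm ((∑ i ∈ S, outer (u i)) - ∑ i, (t i : ℂ) • outer (u i))
              ≤ C * ε ^ ((1 : ℝ) / 8) := by
  refine ⟨3, zero_lt_three, fun d m ε u hu huε t ht0 ht1 => ?_⟩
  obtain ⟨S, hS⟩ := stmt5_general hu huε ht0 ht1
  exact ⟨S, hS.trans (AkemannWeaver.min_one_three_mul_sqrt_le ε)⟩
end

section
/- Let (u_i)_{i ∈ ℕ} be a sequence of vectors in a complex Hilbert space H such that Σ_i u_i ⊗ u_i = I (the partial sums converge to the identity operator in the strong operator topology) and ‖u_i‖² ≤ ε for all i. Then there is a partition of ℕ into sets S_1 and S_2 such that for each j ∈ {1,2}, ‖Σ_{i ∈ S_j} u_i ⊗ u_i‖ ≤ 1/2 + √(2ε) + ε. -/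
open Filter

/-- The rank-one operator `u ⊗ u : v ↦ ⟨v, u⟩ u` on a complex Hilbert space. -/
noncomputable def rankOne {H : Type*} [NormedAddCommGroup H] [InnerProductSpace ℂ H]
    (u : H) : H →L[ℂ] H :=
  (innerSL ℂ u).smulRight u

/-!
Doubling `u i` into the two vectors `u i ⊕ 0` and `0 ⊕ u i` of `H ⊕ H` turns a partition of the
index set into a choice of one vector from each pair. For finitely many vectors, the polynomial
`det (x - 2 ∑ i, a (i, f i) ⊗ a (i, f i))` of a choice `f` is a value of a real stable determinantal
polynomial, so the polynomials of all choices form an interlacing family: some choice has largest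
root at most that of their sum over all choices. That sum is obtained from
`det (x + ∑ k, z k • a k ⊗ a k)` by applying the operators `1 - ∂` at `z = 0`, and a multivariate
barrier argument, moving one pair of coordinates at a time by `1 + s`, shows that it has no root
above `(1 + s) ^ 2`, where `s ^ 2` bounds the squared norms of the pairs. Rado's selection
principle passes to infinite index sets.
-/

section RealRooted

open Polynomial Set

theorem coeff_prod_X_add_C_pos {s : Multiset ℝ} (hs : ∀ a ∈ s, 0 < a) {k : ℕ}
    (hk : k ≤ Multiset.card s) : 0 < (s.map fun a => X + C a).prod.coeff k := by
  induction s using Multiset.induction_on generalizing k with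
  | empty => simp_all
  | cons a s ih =>
    have ha : 0 < a := hs a (Multiset.mem_cons_self a s)
    have ih' {j : ℕ} := ih (fun b hb => hs b (Multiset.mem_cons_of_mem hb)) (k := j)
    have hnonneg (j : ℕ) : 0 ≤ (s.map fun b => X + C b).prod.coeff j := by
      rcases le_or_gt j (Multiset.card s) with hj | hj
      · exact (ih' hj).le
      · exact (coeff_eq_zero_of_natDegree_lt ((natDegree_multiset_prod_le _).trans_lt
          (by simpa using hj))).ge
    rw [Multiset.map_cons, Multiset.prod_cons, add_mul]
    rw [Multiset.card_cons] at hk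
    rcases k with _ | k
    · simpa using mul_pos ha (ih' (Nat.zero_le _))
    · rw [coeff_add, coeff_X_mul, coeff_C_mul]
      exact add_pos_of_pos_of_nonneg (ih' (by lia)) (mul_nonneg ha.le (hnonneg _))

theorem coeff_pos_of_splits {p : ℝ[X]} {n : ℕ} (hp : p.Splits) (hm : IsMonicOfDegree p n)
    (hroots : ∀ x, 0 ≤ x → p.eval x ≠ 0) {k : ℕ} (hk : k ≤ n) : 0 < p.coeff k := by
  have hprod : ((p.roots.map Neg.neg).map fun a => X + C a).prod = p := by
    conv_rhs => rw [hp.eq_prod_roots_of_monic hm.monic]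
    simp [sub_eq_add_neg]
  rw [← hprod]
  refine coeff_prod_X_add_C_pos (fun a ha => ?_)
    (by simpa [← hp.natDegree_eq_card_roots, hm.natDegree_eq] using hk)
  obtain ⟨r, hr, rfl⟩ := Multiset.mem_map.mp ha
  by_contra! hle
  exact hroots r (by linarith) (isRoot_of_mem_roots hr)

theorem taylor_coeff_pos_of_splits {p : ℝ[X]} {n : ℕ} (hp : p.Splits) (hm : IsMonicOfDegree p n)
    {x₀ : ℝ} (hpos : ∀ x, x₀ ≤ x → 0 < p.eval x) {k : ℕ} (hk : k ≤ n) :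
    0 < (taylor x₀ p).coeff k := by
  refine coeff_pos_of_splits (hp.taylor x₀)
    ⟨by rw [natDegree_taylor, hm.natDegree_eq], by
      rw [Monic, leadingCoeff_taylor, hm.leadingCoeff_eq]⟩
    (fun x hx => ?_) hk
  rw [taylor_eval]
  exact (hpos _ (by linarith)).ne'

theorem eval_pos_of_taylor_coeff_nonneg {p : ℝ[X]} {x₀ x : ℝ} (hx : x₀ ≤ x)
    (h₀ : 0 < p.eval x₀) (hc : ∀ k ≤ p.natDegree, 0 ≤ (taylor x₀ p).coeff k) : 0 < p.eval x := by
  rw [← sub_add_cancel x x₀, ← taylor_eval, eval_eq_sum_range, Finset.sum_range_succ']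
  refine add_pos_of_nonneg_of_pos (Finset.sum_nonneg fun k hk => ?_) (by simpa using h₀)
  rw [natDegree_taylor, Finset.mem_range] at hk
  exact mul_nonneg (hc _ hk) (pow_nonneg (sub_nonneg.mpr hx) _)

theorem splits_of_aeval_ne_zero {p : ℝ[X]} (hp : ∀ x : ℂ, 0 < x.im → aeval x p ≠ 0) :
    p.Splits := by
  refine Splits.of_splits_map (algebraMap ℝ ℂ) (IsAlgClosed.splits _) fun x hx => ?_
  have hroot : aeval x p = 0 := by
    simpa [aeval_def, eval_map] using isRoot_of_mem_roots hx
  have hconj : aeval (starRingEnd ℂ x) p = 0 := by rw [aeval_conj, hroot, map_zero]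
  rcases lt_trichotomy x.im 0 with him | him | him
  · exact absurd hconj (hp _ (by simpa using him))
  · exact ⟨x.re, Complex.ext rfl him.symm⟩
  · exact absurd hroot (hp x him)

theorem convex_isMonicOfDegree (n : ℕ) : Convex ℝ {p : ℝ[X] | IsMonicOfDegree p n} := by
  rintro p hp q hq a b - - hab
  rw [mem_ofPred_eq, isMonicOfDegree_iff] at *
  refine ⟨natDegree_add_le_of_degree_le ((natDegree_smul_le a p).trans hp.1)
    ((natDegree_smul_le b q).trans hq.1), ?_⟩
  simp [hp.2, hq.2, hab]

theorem eval_pos_of_continuous_of_splits {h : ℝ → ℝ[X]} {n : ℕ} {x₀ : ℝ}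
    (hmonic : ∀ c ∈ Icc (0 : ℝ) 1, IsMonicOfDegree (h c) n)
    (hsplit : ∀ c ∈ Icc (0 : ℝ) 1, (h c).Splits)
    (hcont : ∀ k, Continuous fun c => (taylor x₀ (h c)).coeff k)
    (hx₀ : ∀ c ∈ Icc (0 : ℝ) 1, 0 < (h c).eval x₀) (hpos : ∀ x, x₀ ≤ x → 0 < (h 0).eval x)
    {x : ℝ} (hx : x₀ ≤ x) : 0 < (h 1).eval x := by
  let t (k : ℕ) (c : ℝ) : ℝ := (taylor x₀ (h c)).coeff k
  have heval {c : ℝ} (hc : c ∈ Icc (0 : ℝ) 1) (hcoeff : ∀ k ≤ n, 0 ≤ t k c) {x : ℝ}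
      (hx : x₀ ≤ x) : 0 < (h c).eval x :=
    eval_pos_of_taylor_coeff_nonneg hx (hx₀ c hc) ((hmonic c hc).natDegree_eq ▸ hcoeff)
  have ht_pos {c : ℝ} (hc : c ∈ Icc (0 : ℝ) 1) (hev : ∀ x, x₀ ≤ x → 0 < (h c).eval x)
      (k : ℕ) (hk : k ≤ n) : 0 < t k c :=
    taylor_coeff_pos_of_splits (hsplit c hc) (hmonic c hc) hev hk
  have h0 : (0 : ℝ) ∈ Icc (0 : ℝ) 1 := left_mem_Icc.mpr zero_le_one
  have h1 : (1 : ℝ) ∈ Icc (0 : ℝ) 1 := right_mem_Icc.mpr zero_le_one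
  let U : Set ℝ := ⋂ k ∈ Iic n, {c | 0 < t k c}
  have hmemU {c : ℝ} : c ∈ U ↔ ∀ k ≤ n, 0 < t k c := by simp [U]
  have hU : IsOpen U :=
    (finite_Iic n).isOpen_biInter fun k _ => isOpen_lt continuous_const (hcont k)
  have hclosure : closure U ∩ Icc 0 1 ⊆ U := by
    rintro c ⟨hcU, hc⟩
    have hnonneg (k : ℕ) (hk : k ≤ n) : 0 ≤ t k c :=
      closure_minimal (fun c' hc' => (hmemU.mp hc' k hk).le)
        (isClosed_le continuous_const (hcont k)) hcU
    exact hmemU.mpr (ht_pos hc fun x hx => heval hc hnonneg hx)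
  have hsub : Icc (0 : ℝ) 1 ⊆ U := isPreconnected_Icc.subset_of_closure_inter_subset hU
    ⟨0, h0, hmemU.mpr (ht_pos h0 hpos)⟩ hclosure
  exact heval h1 (fun k hk => (hmemU.mp (hsub h1) k hk).le) hx

theorem eval_pos_of_segment_splits {f g : ℝ[X]} {n : ℕ} (hf : IsMonicOfDegree f n)
    (hg : IsMonicOfDegree g n) (hsplit : ∀ h ∈ segment ℝ f g, h.Splits) {x₀ : ℝ}
    (hpos : ∀ x, x₀ ≤ x → 0 < f.eval x) (hg₀ : 0 < g.eval x₀) :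
    ∀ x, x₀ ≤ x → 0 < g.eval x := by
  intro x hx
  have hmem (c : ℝ) (hc : c ∈ Icc (0 : ℝ) 1) : (1 - c) • f + c • g ∈ segment ℝ f g :=
    ⟨1 - c, c, sub_nonneg.mpr hc.2, hc.1, sub_add_cancel 1 c, rfl⟩
  have := eval_pos_of_continuous_of_splits (h := fun c => (1 - c) • f + c • g) (n := n)
    (fun c hc => (convex_isMonicOfDegree n).segment_subset hf hg (hmem c hc))
    (fun c hc => hsplit _ (hmem c hc)) (fun k => ?_) (fun c hc => ?_) (by simpa) hx
  · simpa using this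
  · simp only [map_add, map_smul, coeff_add, coeff_smul, smul_eq_mul]
    fun_prop
  · simpa using
      convex_Ioi (0 : ℝ) (hpos x₀ le_rfl) hg₀ (sub_nonneg.mpr hc.2) hc.1 (sub_add_cancel 1 c)

theorem pos_or_pos_of_splits {f g : ℝ[X]} {n : ℕ} (hf : IsMonicOfDegree f n)
    (hg : IsMonicOfDegree g n) (hsplit : ∀ h ∈ segment ℝ f g, h.Splits) {x₀ : ℝ}
    (hpos : ∀ x, x₀ ≤ x → 0 < (midpoint ℝ f g).eval x) :
    (∀ x, x₀ ≤ x → 0 < f.eval x) ∨ ∀ x, x₀ ≤ x → 0 < g.eval x := by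
  have hmid : midpoint ℝ f g ∈ segment ℝ f g := midpoint_mem_segment f g
  have hmonic := (convex_isMonicOfDegree n).segment_subset hf hg hmid
  have hsum : 0 < f.eval x₀ + g.eval x₀ := by
    have := hpos x₀ le_rfl
    rw [midpoint_eq_smul_add, eval_smul, eval_add, smul_eq_mul] at this
    exact (mul_pos_iff_of_pos_left (by norm_num)).mp this
  have hsub {p : ℝ[X]} (hp : p ∈ segment ℝ f g) : segment ℝ (midpoint ℝ f g) p ⊆ segment ℝ f g :=
    (convex_segment f g).segment_subset hmid hp
  rcases lt_or_lt_of_add_lt_add (by simpa using hsum : (0 : ℝ) + 0 < _) with hf₀ | hg₀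
  · exact .inl (eval_pos_of_segment_splits hmonic hf
      (fun h hh => hsplit h (hsub (left_mem_segment ℝ f g) hh)) hpos hf₀)
  · exact .inr (eval_pos_of_segment_splits hmonic hg
      (fun h hh => hsplit h (hsub (right_mem_segment ℝ f g) hh)) hpos hg₀)

end RealRooted

section Multiaffine

variable {R σ ι E : Type*} [DecidableEq σ] [DecidableEq ι] [CommRing R] [AddCommGroup E]
  [Module R E]

/-- The partial derivative `∂ₖ` of functions of the variables `σ`, encoded as the unit forward
difference in the `k`-th variable, with which it agrees on functions affine in that variable. -/
def pderiv (k : σ) : Module.End R ((σ → R) → E) where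
  toFun φ z := φ (z + Pi.single k 1) - φ z
  map_add' φ ψ := by ext; simp only [Pi.add_apply]; abel
  map_smul' c φ := by ext; simp [smul_sub]

theorem pderiv_apply (k : σ) (φ : (σ → R) → E) (z : σ → R) :
    pderiv k φ z = φ (z + Pi.single k 1) - φ z := rfl

theorem pderiv_comm (k l : σ) (φ : (σ → R) → E) :
    pderiv k (pderiv l φ) = pderiv l (pderiv k φ) := by
  ext z
  simp only [pderiv_apply, add_right_comm z]
  abel

theorem map_pderiv {R' E' F : Type*} [CommRing R'] [AddCommGroup E'] [Module R' E']
    [FunLike F E E'] [AddMonoidHomClass F E E'] {φ : (σ → R) → E} {ψ : (σ → R') → E'}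
    (f : F) (g : R →+* R') (h : ∀ z, f (φ z) = ψ (g ∘ z)) (k : σ) (z : σ → R) :
    f (pderiv k φ z) = pderiv k ψ (g ∘ z) := by
  have hg : g ∘ (z + Pi.single k 1) = g ∘ z + Pi.single k 1 := by
    ext l
    simp [Pi.single_apply, apply_ite g]
  rw [pderiv_apply, pderiv_apply, map_sub, h, h, hg]

variable (R σ E) in
/-- The functions of the variables `σ` which are affine in each variable separately. -/
def multiaffine : Submodule R ((σ → R) → E) where
  carrier := {φ | ∀ z k s, φ (z + Pi.single k s) = φ z + s • pderiv k φ z}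
  zero_mem' := by simp
  add_mem' hφ hψ z k s := by
    simp only [Pi.add_apply, map_add, hφ z k s, hψ z k s, smul_add]
    abel
  smul_mem' c φ hφ z k s := by
    simp only [Pi.smul_apply, map_smul, hφ z k s, smul_add, smul_comm s c]

theorem apply_add_single {φ : (σ → R) → E} (hφ : φ ∈ multiaffine R σ E) (z : σ → R) (k : σ)
    (s : R) : φ (z + Pi.single k s) = φ z + s • pderiv k φ z :=
  hφ z k s

theorem pderiv_mem_multiaffine {φ : (σ → R) → E} (hφ : φ ∈ multiaffine R σ E) (k : σ) :
    pderiv k φ ∈ multiaffine R σ E := by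
  intro z l s
  rw [pderiv_comm, pderiv_apply, add_right_comm, hφ, hφ z l s, pderiv_apply k (pderiv l φ),
    pderiv_apply k φ, smul_sub]
  abel

theorem pderiv_pderiv_self {φ : (σ → R) → E} (hφ : φ ∈ multiaffine R σ E) (k : σ) :
    pderiv k (pderiv k φ) = 0 := by
  ext z
  have h2 : φ (z + Pi.single k 1 + Pi.single k 1) = φ z + (2 : R) • pderiv k φ z := by
    rw [add_assoc, ← Pi.single_add, one_add_one_eq_two, hφ]
  rw [pderiv_apply, pderiv_apply k φ (z + _), h2, hφ z k 1, two_smul, one_smul, Pi.zero_apply]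
  abel

/-- The derivative `∂ᵢ` along the diagonal of the two variables `(i, true)` and `(i, false)`. -/
def blockDeriv (i : ι) : Module.End R ((ι × Bool → R) → E) :=
  ∑ b, pderiv (i, b)

theorem blockDeriv_apply (i : ι) (φ : (ι × Bool → R) → E) (z : ι × Bool → R) :
    blockDeriv i φ z = pderiv (i, true) φ z + pderiv (i, false) φ z := by
  simp [blockDeriv]

theorem blockDeriv_comm (i j : ι) (φ : (ι × Bool → R) → E) :
    blockDeriv i (blockDeriv j φ) = blockDeriv j (blockDeriv i φ) := by
  simp only [blockDeriv, LinearMap.sum_apply, map_sum]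
  rw [Finset.sum_comm]
  simp only [pderiv_comm (i, _)]

theorem blockDeriv_mem_multiaffine {φ : (ι × Bool → R) → E}
    (hφ : φ ∈ multiaffine R (ι × Bool) E) (i : ι) :
    blockDeriv i φ ∈ multiaffine R (ι × Bool) E := by
  rw [blockDeriv, LinearMap.sum_apply]
  exact sum_mem fun b _ => pderiv_mem_multiaffine hφ (i, b)

theorem apply_add_block {φ : (ι × Bool → R) → E} (hφ : φ ∈ multiaffine R (ι × Bool) E)
    (z : ι × Bool → R) (i : ι) (s : R) :
    φ (z + Pi.single i s ∘ Prod.fst)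
      = φ z + s • blockDeriv i φ z + s ^ 2 • pderiv (i, true) (pderiv (i, false) φ) z := by
  have hsplit : (Pi.single i s ∘ Prod.fst : ι × Bool → R)
      = Pi.single (i, true) s + Pi.single (i, false) s := by
    ext ⟨j, _ | _⟩ <;> simp [Pi.single_apply]
  rw [hsplit, ← add_assoc, apply_add_single hφ, apply_add_single hφ,
    apply_add_single (pderiv_mem_multiaffine hφ _), blockDeriv_apply]
  module

/-- The operator `∏_{i ∈ L} (1 - ∂ᵢ)` which produces mixed characteristic polynomials. -/
def mixed (L : List ι) : Module.End R ((ι × Bool → R) → E) :=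
  (L.map fun i => 1 - blockDeriv i).prod

theorem mixed_cons (i : ι) (L : List ι) (φ : (ι × Bool → R) → E) :
    mixed (i :: L) φ = mixed L φ - blockDeriv i (mixed L φ) := by
  simp [mixed]

theorem mixed_induction {p : ((ι × Bool → R) → E) → Prop}
    (hp : ∀ φ i, p φ → p (φ - blockDeriv i φ)) (L : List ι) {φ : (ι × Bool → R) → E} (hφ : p φ) :
    p (mixed L φ) := by
  induction L with
  | nil => simpa [mixed]
  | cons i L ih => simpa only [mixed_cons] using hp _ i ih

end Multiaffine

section Stability

variable {σ : Type*} [DecidableEq σ]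

/-- Stability of `ψ`: it has no zeros whose coordinates all lie in `U`, which is the open or the
closed upper half-plane. -/
def IsStableOn (U : Set ℂ) (ψ : (σ → ℂ) → ℂ) : Prop :=
  ∀ z, (∀ k, z k ∈ U) → ψ z ≠ 0

theorem im_div_neg_of_add_mul_ne_zero {a b : ℂ} (h : ∀ s : ℂ, 0 ≤ s.im → a + s * b ≠ 0)
    (hb : b ≠ 0) : (b / a).im < 0 := by
  have him : 0 < (a / b).im := by
    by_contra! hle
    exact h (-(a / b)) (by simpa using hle) (by field_simp; ring)
  have hpos : 0 < Complex.normSq (a / b) :=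
    Complex.normSq_pos.mpr fun h0 => him.ne' (by rw [h0, Complex.zero_im])
  rw [← inv_div, Complex.inv_im]
  exact div_neg_of_neg_of_pos (neg_neg_of_pos him) hpos

theorem IsStableOn.im_pderiv_div_neg {U : Set ℂ} (hU : ∀ w ∈ U, ∀ s : ℂ, 0 ≤ s.im → w + s ∈ U)
    {ψ : (σ → ℂ) → ℂ} (hψ : ψ ∈ multiaffine ℂ σ ℂ) (hs : IsStableOn U ψ) {z : σ → ℂ}
    (hz : ∀ k, z k ∈ U) {k : σ} (hk : pderiv k ψ z ≠ 0) : (pderiv k ψ z / ψ z).im < 0 := by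
  refine im_div_neg_of_add_mul_ne_zero (fun s him => ?_) hk
  rw [← smul_eq_mul, ← apply_add_single hψ]
  refine hs _ fun l => hU _ (hz l) _ ?_
  rcases eq_or_ne l k with rfl | hl
  · simpa
  · simp [hl]

theorem IsStableOn.sub_sum_pderiv {U : Set ℂ} (hU : ∀ w ∈ U, ∀ s : ℂ, 0 ≤ s.im → w + s ∈ U)
    {ψ : (σ → ℂ) → ℂ} (hψ : ψ ∈ multiaffine ℂ σ ℂ) (hs : IsStableOn U ψ) {β : Type*}
    (s : Finset β) (k : β → σ) {c : β → ℝ} (hc : ∀ b ∈ s, 0 ≤ c b) :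
    IsStableOn U (ψ - ∑ b ∈ s, c b • pderiv (k b) ψ) := by
  intro z hz h0
  simp only [Pi.sub_apply, Finset.sum_apply, Pi.smul_apply, sub_eq_zero] at h0
  have hψz : ψ z ≠ 0 := hs z hz
  have hsum : ∑ b ∈ s, c b * (pderiv (k b) ψ z / ψ z).im = 0 := by
    have hone : ∑ b ∈ s, c b • (pderiv (k b) ψ z / ψ z) = 1 := by
      simp only [← smul_div_assoc, ← Finset.sum_div, ← h0, div_self hψz]
    simpa using congrArg Complex.im hone
  have hle (b : β) (hb : b ∈ s) : c b * (pderiv (k b) ψ z / ψ z).im ≤ 0 := by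
    refine mul_nonpos_of_nonneg_of_nonpos (hc b hb) ?_
    by_cases hd : pderiv (k b) ψ z = 0
    · simp [hd]
    · exact (hs.im_pderiv_div_neg hU hψ hz hd).le
  have hzero (b : β) (hb : b ∈ s) : c b • pderiv (k b) ψ z = 0 := by
    rcases mul_eq_zero.mp ((Finset.sum_eq_zero_iff_of_nonpos hle).mp hsum b hb) with hcb | him
    · rw [hcb, zero_smul]
    · by_contra hne
      exact (hs.im_pderiv_div_neg hU hψ hz (right_ne_zero_of_smul hne)).ne him
  exact hψz (h0.trans (Finset.sum_eq_zero hzero))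

end Stability

section RealStability

variable {σ ι : Type*} [DecidableEq σ] [DecidableEq ι]

/-- Real stability of a multiaffine function with real coefficients, expressed through its
extension `ψ` to complex arguments; `ψ` is continuous as a multiaffine polynomial. -/
def IsRealStable (φ : (σ → ℝ) → ℝ) : Prop :=
  ∃ ψ ∈ multiaffine ℂ σ ℂ, Continuous ψ ∧ IsStableOn {w | 0 < w.im} ψ ∧
    ∀ z, (φ z : ℂ) = ψ (Complex.ofRealHom ∘ z)

theorem continuous_pderiv {R E : Type*} [CommRing R] [TopologicalSpace R] [ContinuousAdd R]
    [AddCommGroup E] [Module R E] [TopologicalSpace E] [IsTopologicalAddGroup E]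
    {ψ : (σ → R) → E} (hψ : Continuous ψ) (k : σ) : Continuous (pderiv k ψ) :=
  (hψ.comp (continuous_add_const _)).sub hψ

theorem upperHalfPlane_add_mem {w : ℂ} (hw : w ∈ {w : ℂ | 0 < w.im}) (s : ℂ) (hs : 0 ≤ s.im) :
    w + s ∈ {w : ℂ | 0 < w.im} := by
  simpa using add_pos_of_pos_of_nonneg hw hs

theorem ofRealHom_comp_add_single (z : σ → ℝ) (k : σ) (s : ℝ) :
    Complex.ofRealHom ∘ (z + Pi.single k s) = Complex.ofRealHom ∘ z + Pi.single k (s : ℂ) := by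
  ext l
  simp [Pi.single_apply, apply_ite ((↑) : ℝ → ℂ)]

theorem mem_multiaffine_of_ofReal {φ : (σ → ℝ) → ℝ}
    {ψ : (σ → ℂ) → ℂ} (hψ : ψ ∈ multiaffine ℂ σ ℂ)
    (hφψ : ∀ z, (φ z : ℂ) = ψ (Complex.ofRealHom ∘ z)) : φ ∈ multiaffine ℝ σ ℝ := by
  intro z k s
  have hd := map_pderiv Complex.ofRealHom Complex.ofRealHom hφψ k z
  apply Complex.ofReal_injective
  rw [hφψ, ofRealHom_comp_add_single, apply_add_single hψ, ← hφψ, ← hd]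
  simp

theorem IsRealStable.mem_multiaffine {φ : (σ → ℝ) → ℝ} (hφ : IsRealStable φ) :
    φ ∈ multiaffine ℝ σ ℝ := by
  obtain ⟨ψ, hψ, -, -, hφψ⟩ := hφ
  exact mem_multiaffine_of_ofReal hψ hφψ

theorem IsRealStable.sub_blockDeriv {φ : (ι × Bool → ℝ) → ℝ} (hφ : IsRealStable φ) (i : ι) :
    IsRealStable (φ - blockDeriv i φ) := by
  obtain ⟨ψ, hψ, hcont, hstab, hφψ⟩ := hφ
  refine ⟨ψ - blockDeriv i ψ, sub_mem hψ (blockDeriv_mem_multiaffine hψ i), ?_, ?_, fun z => ?_⟩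
  · have hd (b : Bool) := continuous_pderiv hcont (i, b)
    simpa [blockDeriv] using hcont.sub ((hd true).add (hd false))
  · have := hstab.sub_sum_pderiv (fun _ hw => upperHalfPlane_add_mem hw) hψ Finset.univ
      (fun b => (i, b)) (c := fun _ => 1) fun _ _ => zero_le_one
    simpa [blockDeriv] using this
  · have hd := map_pderiv Complex.ofRealHom Complex.ofRealHom hφψ
    simp only [Pi.sub_apply, blockDeriv_apply, ← hd, ← hφψ]
    simp

theorem IsRealStable.mul_pderiv_pderiv_le {φ : (σ → ℝ) → ℝ} (hφ : IsRealStable φ) (k l : σ)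
    (z : σ → ℝ) : φ z * pderiv k (pderiv l φ) z ≤ pderiv k φ z * pderiv l φ z := by
  obtain ⟨ψ, hψ, hcont, hstab, hφψ⟩ := hφ
  let w (η : ℝ) : σ → ℂ := Complex.ofRealHom ∘ z + Pi.single k Complex.I + fun _ => η * Complex.I
  have hopen (η : ℝ) (hη : 0 < η) :
      (pderiv l ψ (w η) * starRingEnd ℂ (ψ (w η))).im ≤ 0 := by
    have hw (m : σ) : 0 < (w η m).im := by
      rcases eq_or_ne m k with rfl | hm
      · simp [w]; linarith
      · simpa [w, hm]
    by_cases hd : pderiv l ψ (w η) = 0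
    · simp [hd]
    have him := hstab.im_pderiv_div_neg (fun _ hw => upperHalfPlane_add_mem hw) hψ hw hd
    have hmul : pderiv l ψ (w η) * starRingEnd ℂ (ψ (w η))
        = pderiv l ψ (w η) / ψ (w η) * (Complex.normSq (ψ (w η)) : ℝ) := by
      rw [← Complex.mul_conj]
      field_simp [hstab _ hw]
    rw [hmul, Complex.im_mul_ofReal]
    exact mul_nonpos_of_nonpos_of_nonneg him.le (Complex.normSq_nonneg _)
  have hlim : (pderiv l ψ (w 0) * starRingEnd ℂ (ψ (w 0))).im ≤ 0 := by
    have hc : Continuous fun η => (pderiv l ψ (w η) * starRingEnd ℂ (ψ (w η))).im := by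
      have := continuous_pderiv hcont l
      have : Continuous w := by fun_prop
      fun_prop
    exact le_of_tendsto ((hc.tendsto 0).mono_left nhdsWithin_le_nhds)
      (eventually_mem_nhdsWithin.mono fun η hη => hopen η (Set.mem_Ioi.mp hη))
  have hd (m : σ) := map_pderiv Complex.ofRealHom Complex.ofRealHom hφψ m
  have hw0 : w 0 = Complex.ofRealHom ∘ z + Pi.single k Complex.I := by
    ext
    simp [w]
  rw [hw0, apply_add_single hψ, apply_add_single (pderiv_mem_multiaffine hψ l), ← hd, ← hφψ, ← hd,
    ← map_pderiv Complex.ofRealHom Complex.ofRealHom (hd l)] at hlim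
  simp at hlim
  linarith

end RealStability

section Barrier

variable {ι : Type*} [DecidableEq ι]

/-- A point `z` is `β`-above the roots of `φ` if, on the whole orthant over `z`, `φ` is positive
and its barrier functions, the logarithmic derivatives `∂ⱼφ / φ`, are at most `β`. -/
def IsAboveRoots (φ : (ι × Bool → ℝ) → ℝ) (β : ℝ) (z : ι × Bool → ℝ) : Prop :=
  ∀ w, z ≤ w → 0 < φ w ∧ ∀ j, blockDeriv j φ w ≤ β * φ w

theorem pderiv_nonneg_of_nonneg {σ : Type*} [DecidableEq σ] {φ : (σ → ℝ) → ℝ}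
    (hφ : φ ∈ multiaffine ℝ σ ℝ) {z : σ → ℝ} (hpos : ∀ w, z ≤ w → 0 ≤ φ w) (k : σ) (w : σ → ℝ)
    (hw : z ≤ w) : 0 ≤ pderiv k φ w := by
  by_contra! hneg
  have hs : 0 ≤ (φ w + 1) / -pderiv k φ w := div_nonneg (by linarith [hpos w hw]) (by linarith)
  have h := hpos (w + Pi.single k ((φ w + 1) / -pderiv k φ w))
    (le_add_of_le_of_nonneg hw (Pi.single_nonneg.mpr hs))
  rw [apply_add_single hφ, smul_eq_mul, div_neg, neg_mul, div_mul_cancel₀ _ hneg.ne] at h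
  linarith

theorem nonneg_of_forall_nonneg_add_mul {a b B C : ℝ} (ha : 0 ≤ a) (hB : 0 ≤ B) (hC : 0 < C)
    (h : ∀ s, 0 ≤ C * a + s * (2 * C + s * B) * b) : 0 ≤ b := by
  by_contra! hneg
  have hs : 0 ≤ (a + 1) / (-(2 * b)) := div_nonneg (by linarith) (by linarith)
  have hsb : (a + 1) / (-(2 * b)) * b = -(a + 1) / 2 := by
    rw [div_neg, neg_mul, div_mul_eq_mul_div, mul_div_mul_right _ _ hneg.ne, neg_div]
  set s := (a + 1) / (-(2 * b))
  have hneg' : 0 ≤ C * (a + 2 * (s * b)) + s * B * (s * b) := by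
    linear_combination h s
  rw [hsb] at hneg'
  nlinarith [mul_nonneg (mul_nonneg hs hB) (by linarith : 0 ≤ a + 1)]

theorem wronskian_bounds {A B C A' B' C' δ : ℝ} (hA : 0 ≤ A) (hB : 0 ≤ B) (hC : 0 < C)
    (hδ : 1 < δ) (hδB : δ * B ≤ (δ - 1) * C)
    (hW : ∀ s, (C + s * B + s ^ 2 * A) * (B' + s * (2 * A')) ≤
      (B + s * (2 * A)) * (C' + s * B' + s ^ 2 * A')) :
    0 ≤ A * C' - A' * C ∧ δ * (A * C' - A' * C) ≤ (δ - 1) * (B * C' - B' * C) := by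
  set W₀₁ := B * C' - B' * C
  set W₀₂ := A * C' - A' * C
  -- the Plücker relation eliminates `A * B' - A' * B`
  have hlin (s : ℝ) : 0 ≤ (C - s ^ 2 * A) * W₀₁ + s * (2 * C + s * B) * W₀₂ := by
    have := mul_nonneg hC.le (sub_nonneg.mpr (hW s))
    linear_combination this
  have h₀₁ : 0 ≤ W₀₁ := by
    have := hlin 0
    simp only [ne_eq, OfNat.ofNat_ne_zero, not_false_eq_true, zero_pow, zero_mul, sub_zero,
      add_zero] at this
    exact nonneg_of_mul_nonneg_right this hC
  have hlin' (s : ℝ) : 0 ≤ C * W₀₁ + s * (2 * C + s * B) * W₀₂ := by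
    nlinarith [hlin s, mul_nonneg (mul_nonneg (sq_nonneg s) hA) h₀₁]
  have h₀₂ : 0 ≤ W₀₂ := nonneg_of_forall_nonneg_add_mul h₀₁ hB hC hlin'
  refine ⟨h₀₂, ?_⟩
  have hδ' : 0 < δ - 1 := sub_pos.mpr hδ
  obtain ⟨r, hr⟩ : ∃ r, r * (δ - 1) = δ := ⟨δ / (δ - 1), div_mul_cancel₀ _ hδ'.ne'⟩
  have hr0 : 0 ≤ r := by nlinarith
  have hrB : r * B ≤ C := by
    refine le_of_mul_le_mul_left ?_ hδ'
    linear_combination hδB + B * hr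
  have hCW : C * (r * W₀₂) ≤ C * W₀₁ := by
    linear_combination hlin' (-r) + mul_le_mul_of_nonneg_left hrB (mul_nonneg hr0 h₀₂)
  have := mul_le_mul_of_nonneg_left (le_of_mul_le_mul_left hCW hC) hδ'.le
  linear_combination this - W₀₂ * hr

theorem barrier_step_pos {A B C δ : ℝ} (hA : 0 ≤ A) (hC : 0 < C) (hδ : 1 < δ)
    (hδB : δ * B ≤ (δ - 1) * C) (hdisc : 4 * (A * C) ≤ B ^ 2) (hB : 0 ≤ B) :
    0 < C + (δ - 1) * B + δ * (δ - 2) * A := by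
  have hδA : 4 * (δ * A) ≤ (δ - 1) * B := by
    refine le_of_mul_le_mul_right ?_ hC
    linear_combination δ * hdisc + B * hδB
  nlinarith [mul_nonneg hA (sq_nonneg δ)]

theorem barrier_step_le {A B C A' B' C' β δ : ℝ} (hC : 0 < C) (hδ : 1 < δ) (hC' : C' ≤ β * C)
    (h₀₂ : 0 ≤ A * C' - A' * C)
    (h₀₁ : δ * (A * C' - A' * C) ≤ (δ - 1) * (B * C' - B' * C))
    (hpos : 0 < C + (δ - 1) * B + δ * (δ - 2) * A) :
    C' + (δ - 1) * B' + δ * (δ - 2) * A' ≤ β * (C + (δ - 1) * B + δ * (δ - 2) * A) := by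
  have h₀₂' : 0 ≤ δ * (δ - 1) * (A * C' - A' * C) :=
    mul_nonneg (mul_nonneg (by linarith) (by linarith)) h₀₂
  refine le_of_mul_le_mul_right ?_ hC
  linear_combination h₀₁ + h₀₂' + mul_le_mul_of_nonneg_left hC' hpos.le

theorem blockDeriv_apply_add_block {φ : (ι × Bool → ℝ) → ℝ}
    (hφ : φ ∈ multiaffine ℝ (ι × Bool) ℝ) (z : ι × Bool → ℝ) (i : ι) (s : ℝ) :
    blockDeriv i φ (z + Pi.single i s ∘ Prod.fst)
      = blockDeriv i φ z + s * (2 * pderiv (i, true) (pderiv (i, false) φ) z) := by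
  have hfirst : blockDeriv i (blockDeriv i φ) z = 2 * pderiv (i, true) (pderiv (i, false) φ) z := by
    simp only [blockDeriv, Fintype.sum_bool, LinearMap.add_apply, map_add, pderiv_pderiv_self hφ,
      pderiv_comm (i, false) (i, true), Pi.add_apply, Pi.zero_apply]
    ring
  have hsecond : pderiv (i, true) (pderiv (i, false) (blockDeriv i φ)) = 0 := by
    simp only [blockDeriv, Fintype.sum_bool, LinearMap.add_apply, map_add, pderiv_pderiv_self hφ,
      pderiv_comm (i, false) (i, true), pderiv_pderiv_self (pderiv_mem_multiaffine hφ _),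
      add_zero]
  rw [apply_add_block (blockDeriv_mem_multiaffine hφ i), hfirst, hsecond, Pi.zero_apply, smul_zero,
    add_zero, smul_eq_mul]

theorem sub_blockDeriv_apply_add_block {φ : (ι × Bool → ℝ) → ℝ}
    (hφ : φ ∈ multiaffine ℝ (ι × Bool) ℝ) (z : ι × Bool → ℝ) (i : ι) (s : ℝ) :
    (φ - blockDeriv i φ) (z + Pi.single i s ∘ Prod.fst)
      = φ z + (s - 1) * blockDeriv i φ z
        + s * (s - 2) * pderiv (i, true) (pderiv (i, false) φ) z := by
  rw [Pi.sub_apply, apply_add_block hφ, blockDeriv_apply_add_block hφ, smul_eq_mul, smul_eq_mul]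
  ring

theorem IsRealStable.mul_blockDeriv_blockDeriv_le {φ : (ι × Bool → ℝ) → ℝ} (hφ : IsRealStable φ)
    (i j : ι) (z : ι × Bool → ℝ) :
    φ z * blockDeriv i (blockDeriv j φ) z ≤ blockDeriv i φ z * blockDeriv j φ z := by
  have h (b c : Bool) := hφ.mul_pderiv_pderiv_le (i, b) (j, c) z
  simp only [blockDeriv, Fintype.sum_bool, LinearMap.add_apply, map_add, Pi.add_apply]
  linarith [h true true, h true false, h false true, h false false]

theorem IsRealStable.four_mul_pderiv_pderiv_le {φ : (ι × Bool → ℝ) → ℝ} (hφ : IsRealStable φ)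
    (i : ι) (z : ι × Bool → ℝ) :
    4 * (pderiv (i, true) (pderiv (i, false) φ) z * φ z) ≤ blockDeriv i φ z ^ 2 := by
  rw [blockDeriv_apply]
  linarith [hφ.mul_pderiv_pderiv_le (i, true) (i, false) z,
    sq_nonneg (pderiv (i, true) φ z - pderiv (i, false) φ z)]

theorem IsAboveRoots.sub_blockDeriv {φ : (ι × Bool → ℝ) → ℝ} (hφ : IsRealStable φ) {β δ : ℝ}
    (hδ : 1 < δ) (hβ : β * δ ≤ δ - 1) {z : ι × Bool → ℝ} (hz : IsAboveRoots φ β z) (i : ι) :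
    IsAboveRoots (φ - blockDeriv i φ) β (z + Pi.single i δ ∘ Prod.fst) := by
  intro w hw
  have hφm := hφ.mem_multiaffine
  obtain ⟨y, rfl⟩ : ∃ y, w = y + Pi.single i δ ∘ Prod.fst := ⟨_, (sub_add_cancel _ _).symm⟩
  have hy : z ≤ y := le_of_add_le_add_right hw
  obtain ⟨hC, hβy⟩ := hz y hy
  have hnonneg (b : Bool) := pderiv_nonneg_of_nonneg hφm (fun w hw => (hz w hw).1.le) (i, b)
  have hA : 0 ≤ pderiv (i, true) (pderiv (i, false) φ) y :=
    pderiv_nonneg_of_nonneg (pderiv_mem_multiaffine hφm _) (hnonneg false) _ y hy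
  have hB : 0 ≤ blockDeriv i φ y := by
    rw [blockDeriv_apply]
    exact add_nonneg (hnonneg true y hy) (hnonneg false y hy)
  have hδB : δ * blockDeriv i φ y ≤ (δ - 1) * φ y := by
    linear_combination δ * hβy i + φ y * hβ
  have hpos := barrier_step_pos hA hC hδ hδB (hφ.four_mul_pderiv_pderiv_le i y) hB
  rw [sub_blockDeriv_apply_add_block hφm]
  refine ⟨hpos, fun j => ?_⟩
  have hφj := blockDeriv_mem_multiaffine hφm j
  have hW (s : ℝ) := hφ.mul_blockDeriv_blockDeriv_le i j (y + Pi.single i s ∘ Prod.fst)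
  simp only [apply_add_block hφm, blockDeriv_apply_add_block hφm, apply_add_block hφj,
    blockDeriv_apply_add_block hφj, smul_eq_mul] at hW
  obtain ⟨h₀₂, h₀₁⟩ := wronskian_bounds hA hB hC hδ hδB hW
  rw [map_sub, blockDeriv_comm j i, sub_blockDeriv_apply_add_block hφj]
  exact barrier_step_le hC hδ (hβy j) h₀₂ h₀₁ hpos

theorem IsAboveRoots.mixed_apply {φ : (ι × Bool → ℝ) → ℝ} (hφ : IsRealStable φ) {β δ : ℝ}
    (hδ : 1 < δ) (hβ : β * δ ≤ δ - 1) {z : ι × Bool → ℝ} (hz : IsAboveRoots φ β z) (L : List ι) :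
    IsAboveRoots (mixed L φ) β (z + (L.map fun i => Pi.single i δ ∘ Prod.fst).sum) := by
  induction L with
  | nil => simpa [mixed] using hz
  | cons i L ih =>
    have hstable := mixed_induction (fun _ i h => h.sub_blockDeriv i) L hφ
    have := ih.sub_blockDeriv hstable hδ hβ i
    rwa [mixed_cons, List.map_cons, List.sum_cons, add_comm (_ ∘ _), ← add_assoc]

end Barrier

section InterlacingFamily

open Polynomial

variable {ι : Type*} [DecidableEq ι]

/-- A multiaffine family `P` of monic polynomials of degree `n` all of whose members, as well as
all the averages met in the method of interlacing families, are real-rooted: the polynomial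
`P z` evaluated at a point of the upper half-plane extends to a stable function of `z`. -/
structure IsStableFamily (n : ℕ) (P : (ι × Bool → ℝ) → ℝ[X]) : Prop where
  mem_multiaffine : P ∈ multiaffine ℝ (ι × Bool) ℝ[X]
  isMonicOfDegree : ∀ z, IsMonicOfDegree (P z) n
  exists_isStableOn : ∀ x : ℂ, 0 < x.im → ∃ ψ ∈ multiaffine ℂ (ι × Bool) ℂ,
    IsStableOn {w | 0 ≤ w.im} ψ ∧ ∀ z, aeval x (P z) = ψ (Complex.ofRealHom ∘ z)

theorem IsStableFamily.splits {n : ℕ} {P : (ι × Bool → ℝ) → ℝ[X]} (hP : IsStableFamily n P)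
    (z : ι × Bool → ℝ) : (P z).Splits := by
  refine splits_of_aeval_ne_zero fun x hx => ?_
  obtain ⟨ψ, -, hstab, hPψ⟩ := hP.exists_isStableOn x hx
  rw [hPψ]
  exact hstab _ (by simp)

theorem sub_sum_pderiv_apply {P : (ι × Bool → ℝ) → ℝ[X]}
    (hP : P ∈ multiaffine ℝ (ι × Bool) ℝ[X]) (i : ι) {c : Bool → ℝ} (hc : ∑ b, c b = 1)
    (z : ι × Bool → ℝ) :
    (P - ∑ b, (2 * c b) • pderiv (i, b) P) z = ∑ b, c b • P (z + Pi.single (i, b) (-2)) := by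
  rw [Fintype.sum_bool] at hc
  simp only [apply_add_single hP, Fintype.sum_bool, Pi.sub_apply, Pi.add_apply, Pi.smul_apply]
  rw [eq_sub_of_add_eq' hc]
  module

theorem IsStableFamily.sub_sum_pderiv {n : ℕ} {P : (ι × Bool → ℝ) → ℝ[X]}
    (hP : IsStableFamily n P) (i : ι) {c : Bool → ℝ} (hc₀ : ∀ b, 0 ≤ c b) (hc : ∑ b, c b = 1) :
    IsStableFamily n (P - ∑ b, (2 * c b) • pderiv (i, b) P) where
  mem_multiaffine := sub_mem hP.mem_multiaffine <| sum_mem fun b _ =>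
    Submodule.smul_mem _ _ (pderiv_mem_multiaffine hP.mem_multiaffine (i, b))
  isMonicOfDegree z := by
    rw [sub_sum_pderiv_apply hP.mem_multiaffine i hc]
    exact (convex_isMonicOfDegree n).sum_mem (fun b _ => hc₀ b) hc
      fun b _ => hP.isMonicOfDegree _
  exists_isStableOn x hx := by
    obtain ⟨ψ, hψ, hstab, hPψ⟩ := hP.exists_isStableOn x hx
    refine ⟨ψ - ∑ b, (2 * c b) • pderiv (i, b) ψ, ?_, ?_, fun z => ?_⟩
    · refine sub_mem hψ (sum_mem fun b _ => ?_)
      rw [← Complex.coe_smul]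
      exact Submodule.smul_mem _ _ (pderiv_mem_multiaffine hψ (i, b))
    · refine hstab.sub_sum_pderiv (fun w hw s hs => ?_) hψ Finset.univ (fun b => (i, b))
        fun b _ => mul_nonneg zero_le_two (hc₀ b)
      simpa using add_nonneg hw hs
    · have hd := map_pderiv (aeval x) Complex.ofRealHom hPψ
      simp only [Pi.sub_apply, Finset.sum_apply, Pi.smul_apply, map_sub, map_sum, map_smul, hPψ, hd]

theorem sub_blockDeriv_eq (P : (ι × Bool → ℝ) → ℝ[X]) (i : ι) :
    P - blockDeriv i P = P - ∑ b, (2 * (2⁻¹ : ℝ)) • pderiv (i, b) P := by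
  simp [blockDeriv]

theorem IsStableFamily.sub_blockDeriv {n : ℕ} {P : (ι × Bool → ℝ) → ℝ[X]}
    (hP : IsStableFamily n P) (i : ι) : IsStableFamily n (P - blockDeriv i P) := by
  rw [sub_blockDeriv_eq]
  exact hP.sub_sum_pderiv i (fun _ => by norm_num) (by simp)

theorem IsStableFamily.exists_eval_pos {n : ℕ} {P : (ι × Bool → ℝ) → ℝ[X]}
    (hP : IsStableFamily n P) {x₀ : ℝ} (i : ι) {z : ι × Bool → ℝ}
    (hpos : ∀ x, x₀ ≤ x → 0 < ((P - blockDeriv i P) z).eval x) :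
    ∃ b, ∀ x, x₀ ≤ x → 0 < (P (z + Pi.single (i, b) (-2))).eval x := by
  have hmid : (P - blockDeriv i P) z
      = midpoint ℝ (P (z + Pi.single (i, true) (-2))) (P (z + Pi.single (i, false) (-2))) := by
    rw [sub_blockDeriv_eq, sub_sum_pderiv_apply hP.mem_multiaffine i (by simp),
      midpoint_eq_smul_add, Fintype.sum_bool, smul_add, invOf_eq_inv]
  have hsplit (h) (hh : h ∈ segment ℝ (P (z + Pi.single (i, true) (-2)))
      (P (z + Pi.single (i, false) (-2)))) : h.Splits := by
    obtain ⟨s, t, hs, ht, hst, rfl⟩ := hh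
    have hc : ∑ b, cond b s t = 1 := by simpa
    have := (hP.sub_sum_pderiv i (Bool.forall_bool.mpr ⟨ht, hs⟩) hc).splits z
    rwa [sub_sum_pderiv_apply hP.mem_multiaffine i hc, Fintype.sum_bool] at this
  rw [hmid] at hpos
  rcases pos_or_pos_of_splits (hP.isMonicOfDegree _) (hP.isMonicOfDegree _) hsplit hpos with h | h
  · exact ⟨true, h⟩
  · exact ⟨false, h⟩

theorem IsStableFamily.exists_choice_eval_pos {n : ℕ} {P : (ι × Bool → ℝ) → ℝ[X]}
    (hP : IsStableFamily n P) {x₀ : ℝ} {L : List ι} (hL : L.Nodup) {z : ι × Bool → ℝ}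
    (hpos : ∀ x, x₀ ≤ x → 0 < (mixed L P z).eval x) :
    ∃ f : ι → Bool, ∀ x, x₀ ≤ x →
      0 < (P (z + (L.map fun i => Pi.single (i, f i) (-2)).sum)).eval x := by
  induction L generalizing z with
  | nil => exact ⟨fun _ => true, by simpa [mixed] using hpos⟩
  | cons i L ih =>
    obtain ⟨hi, hL⟩ := List.nodup_cons.mp hL
    simp only [mixed_cons] at hpos
    have hstable := mixed_induction (fun _ i h => h.sub_blockDeriv i) L hP
    obtain ⟨b, hb⟩ := hstable.exists_eval_pos i hpos
    obtain ⟨f, hf⟩ := ih hL hb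
    refine ⟨Function.update f i b, ?_⟩
    have hmap : (L.map fun j => (Pi.single (j, Function.update f i b j) (-2) : ι × Bool → ℝ))
        = L.map fun j => Pi.single (j, f j) (-2) :=
      List.map_congr_left fun j hj => by
        rw [Function.update_of_ne (ne_of_mem_of_not_mem hj hi)]
    simpa only [List.map_cons, List.sum_cons, Function.update_self, hmap, add_assoc] using hf

theorem map_mixed {R E E' : Type*} [CommRing R] [AddCommGroup E] [Module R E] [AddCommGroup E']
    [Module R E'] (f : E →ₗ[R] E') (L : List ι) (φ : (ι × Bool → R) → E) (z : ι × Bool → R) :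
    f (mixed L φ z) = mixed L (f ∘ φ) z := by
  induction L generalizing z with
  | nil => rfl
  | cons i L ih =>
    have hd := map_pderiv (ψ := mixed L (f ∘ φ)) f (RingHom.id R) ih
    simp only [mixed_cons, Pi.sub_apply, blockDeriv_apply, map_sub, map_add, ih, hd]
    rfl

end InterlacingFamily

section Determinant

variable {E : Type*} [NormedAddCommGroup E] [InnerProductSpace ℂ E]

theorem rankOne_apply (u v : E) : rankOne u v = inner ℂ u v • u := rfl

theorem inner_rankOne (u v : E) : inner ℂ v (rankOne u v) = (‖inner ℂ u v‖ ^ 2 : ℝ) := by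
  rw [rankOne_apply, inner_smul_right, ← inner_conj_symm v u, Complex.mul_conj,
    Complex.normSq_eq_norm_sq]

theorem mul_norm_le_norm_of_coercive {K : E →L[ℂ] E} {t : ℝ}
    (hK : ∀ v, t * ‖v‖ ^ 2 ≤ (inner ℂ v (K v)).re) (v : E) : t * ‖v‖ ≤ ‖K v‖ := by
  rcases eq_or_ne v 0 with rfl | hv
  · simp
  refine le_of_mul_le_mul_left ?_ (norm_pos_iff.mpr hv)
  calc ‖v‖ * (t * ‖v‖) = t * ‖v‖ ^ 2 := by ring
    _ ≤ (inner ℂ v (K v)).re := hK v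
    _ ≤ ‖v‖ * ‖K v‖ := re_inner_le_norm (𝕜 := ℂ) v (K v)

theorem det_add_rankOne [FiniteDimensional ℂ E] (K : E →L[ℂ] E) {u w : E} (hw : K w = u) :
    (K + rankOne u).det = K.det * (1 + inner ℂ u w) := by
  have hfactor : (K + rankOne u).toLinearMap
      = K.toLinearMap ∘ₗ LinearMap.transvection (innerSL ℂ u).toLinearMap w := by
    ext v
    simp [LinearMap.transvection.apply, rankOne_apply, hw]
  simp only [ContinuousLinearMap.det, hfactor, LinearMap.det_comp, LinearMap.transvection.det]
  rfl

theorem exists_det_add_smul_rankOne [FiniteDimensional ℂ E] (A : E →L[ℂ] E) (u : E) :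
    ∃ d, ∀ s : ℂ, (A + s • rankOne u).det = A.det + s * d := by
  rcases eq_or_ne u 0 with rfl | hu
  · refine ⟨0, fun s => ?_⟩
    simp [rankOne]
  obtain ⟨t, e, ht, he⟩ := Orthonormal.exists_orthonormalBasis_extension (𝕜 := ℂ)
    (v := {((‖u‖⁻¹ : ℝ) : ℂ) • u})
      ⟨by simp [norm_smul, hu], fun i j hij => absurd (Subsingleton.elim i j) hij⟩
  classical
  let i₀ : t := ⟨_, ht rfl⟩
  have horth (i : t) (hi : i ≠ i₀) : rankOne u (e i) = 0 := by
    have h0 : inner ℂ (e i₀) (e i) = 0 := e.orthonormal.2 hi.symm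
    have hi₀ : e i₀ = ((‖u‖⁻¹ : ℝ) : ℂ) • u := congrFun he i₀
    simp_all [rankOne_apply]
  have hupdate (s : ℂ) : (A + s • rankOne u) ∘ e
      = Function.update (A ∘ e) i₀ (A (e i₀) + s • rankOne u (e i₀)) := by
    ext i
    rcases eq_or_ne i i₀ with rfl | hi
    · simp
    · simp [hi, horth i hi]
  have hself : Function.update (A ∘ e) i₀ (A (e i₀)) = A ∘ e := Function.update_eq_self i₀ _
  refine ⟨e.toBasis.det (Function.update (A ∘ e) i₀ (rankOne u (e i₀))), fun s => ?_⟩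
  have hdet (B : E →L[ℂ] E) : B.det = e.toBasis.det (B ∘ e) := by
    have := e.toBasis.det_comp B.toLinearMap e.toBasis
    rw [Module.Basis.det_self, mul_one] at this
    simpa [ContinuousLinearMap.det] using this.symm
  rw [hdet, hdet, hupdate, AlternatingMap.map_update_add, AlternatingMap.map_update_smul,
    smul_eq_mul, hself]

variable {σ : Type*} [Fintype σ]

/-- The operator `x + ∑ₖ zₖ aₖ ⊗ aₖ`; its determinant as a function of `z` is, up to the sign of
`z`, the characteristic polynomial at `x` of a combination of the `aₖ ⊗ aₖ`. -/
noncomputable def pencil (a : σ → E) (x : ℂ) (z : σ → ℂ) : E →L[ℂ] E :=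
  x • 1 + ∑ k, z k • rankOne (a k)

theorem pencil_add_single [DecidableEq σ] (a : σ → E) (x : ℂ) (z : σ → ℂ) (k : σ) (s : ℂ) :
    pencil a x (z + Pi.single k s) = pencil a x z + s • rankOne (a k) := by
  simp [pencil, add_smul, Finset.sum_add_distrib, Pi.single_apply, add_assoc]

theorem inner_pencil (a : σ → E) (x : ℂ) (z : σ → ℂ) (v : E) :
    inner ℂ v (pencil a x z v)
      = x * (‖v‖ ^ 2 : ℝ) + ∑ k, z k * (‖inner ℂ (a k) v‖ ^ 2 : ℝ) := by
  simp only [pencil, add_apply, sum_apply, smul_apply, one_apply_eq_self, inner_add_right,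
    inner_sum, inner_smul_right, inner_rankOne, inner_self_eq_norm_sq_to_K]
  simp

theorem re_inner_pencil (a : σ → E) (x : ℝ) (z : σ → ℝ) (v : E) :
    (inner ℂ v (pencil a x (Complex.ofRealHom ∘ z) v)).re
      = x * ‖v‖ ^ 2 + ∑ k, z k * ‖inner ℂ (a k) v‖ ^ 2 := by
  simp only [inner_pencil, Complex.add_re, Complex.re_sum, Function.comp_apply,
    Complex.ofRealHom_eq_coe, Complex.re_ofReal_mul, Complex.ofReal_re]

theorem isSymmetric_pencil (a : σ → E) (x : ℝ) (z : σ → ℝ) :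
    (pencil a x (Complex.ofRealHom ∘ z)).IsSymmetric := by
  refine (LinearMap.isSymmetric_iff_inner_map_self_real _).mpr fun v => ?_
  rw [ContinuousLinearMap.coe_coe, inner_conj_symm, ← inner_conj_symm _ v, inner_pencil]
  simp

variable [FiniteDimensional ℂ E]

theorem exists_pos_det_eq_ofReal {K : E →L[ℂ] E} (hsymm : K.IsSymmetric) {t : ℝ} (ht : 0 < t)
    (hK : ∀ v, t * ‖v‖ ^ 2 ≤ (inner ℂ v (K v)).re) : ∃ d : ℝ, 0 < d ∧ K.det = d := by
  have heig (i) : 0 < hsymm.eigenvalues rfl i := by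
    have h := hK (hsymm.eigenvectorBasis rfl i)
    have hi : K (hsymm.eigenvectorBasis rfl i) = _ := hsymm.apply_eigenvectorBasis rfl i
    rw [hi, inner_smul_right, inner_self_eq_norm_sq_to_K, OrthonormalBasis.norm_eq_one] at h
    simp at h
    linarith
  refine ⟨∏ i, hsymm.eigenvalues rfl i, Finset.prod_pos fun i _ => heig i, ?_⟩
  rw [ContinuousLinearMap.det, hsymm.det_eq_prod_eigenvalues rfl]
  simp

theorem det_add_rankOne_re_le {K : E →L[ℂ] E} (hsymm : K.IsSymmetric) {t : ℝ} (ht : 0 < t)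
    (hK : ∀ v, t * ‖v‖ ^ 2 ≤ (inner ℂ v (K v)).re) (u : E) :
    (K + rankOne u).det.re ≤ (1 + ‖u‖ ^ 2 / t) * K.det.re := by
  obtain ⟨d, hd, hdet⟩ := exists_pos_det_eq_ofReal hsymm ht hK
  have hdet0 : LinearMap.det K.toLinearMap ≠ 0 := by
    rw [← ContinuousLinearMap.det, hdet]
    exact_mod_cast hd.ne'
  obtain ⟨w, hw⟩ : ∃ w, K w = u := (LinearMap.equivOfDetNeZero _ hdet0).surjective u
  have hle : (inner ℂ u w).re ≤ ‖u‖ ^ 2 / t := by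
    have hnorm := mul_norm_le_norm_of_coercive hK w
    rw [hw] at hnorm
    rw [le_div_iff₀ ht]
    calc (inner ℂ u w).re * t ≤ ‖u‖ * ‖w‖ * t :=
          mul_le_mul_of_nonneg_right (re_inner_le_norm (𝕜 := ℂ) u w) ht.le
      _ = ‖u‖ * (t * ‖w‖) := by ring
      _ ≤ ‖u‖ ^ 2 := by
          rw [pow_two]
          exact mul_le_mul_of_nonneg_left hnorm (norm_nonneg u)
  rw [det_add_rankOne K hw, hdet, Complex.re_ofReal_mul, Complex.ofReal_re, mul_comm d]
  refine mul_le_mul_of_nonneg_right ?_ hd.le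
  simpa using hle

theorem det_pencil_mem_multiaffine [DecidableEq σ] (a : σ → E) (x : ℂ) :
    (fun z => (pencil a x z).det) ∈ multiaffine ℂ σ ℂ := by
  intro z k s
  obtain ⟨d, hd⟩ := exists_det_add_smul_rankOne (pencil a x z) (a k)
  have h1 := hd 1
  rw [one_smul] at h1
  simp [pderiv_apply, pencil_add_single, hd, h1]

theorem continuous_det_pencil (a : σ → E) (x : ℂ) : Continuous fun z => (pencil a x z).det :=
  ContinuousLinearMap.continuous_det.comp (by unfold pencil; fun_prop)

theorem det_pencil_ne_zero {a : σ → E} {x : ℂ} {z : σ → ℂ}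
    (h : ∀ v, inner ℂ v (pencil a x z v) = 0 → v = 0) : (pencil a x z).det ≠ 0 := by
  intro hdet
  obtain ⟨v, hv, hv0⟩ := (Submodule.ne_bot_iff _).mp (LinearMap.bot_lt_ker_of_det_eq_zero hdet).ne'
  have hv' : pencil a x z v = 0 := hv
  exact hv0 (h v (by rw [hv', inner_zero_right]))

theorem isStableOn_det_pencil_of_im_pos (a : σ → E) {x : ℂ} (hx : 0 < x.im) :
    IsStableOn {w | 0 ≤ w.im} fun z => (pencil a x z).det := by
  intro z hz
  refine det_pencil_ne_zero fun v hv => ?_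
  rw [inner_pencil] at hv
  have him := congrArg Complex.im hv
  simp only [Complex.add_im, Complex.im_sum, Complex.im_mul_ofReal, Complex.zero_im] at him
  have hsum : 0 ≤ ∑ k, (z k).im * ‖inner ℂ (a k) v‖ ^ 2 :=
    Finset.sum_nonneg fun k _ => mul_nonneg (hz k) (sq_nonneg _)
  by_contra hv0
  nlinarith [mul_pos hx (pow_pos (norm_pos_iff.mpr hv0) 2)]

theorem isStableOn_det_pencil_of_pos (a : σ → E) {x : ℝ} (hx : 0 < x) :
    IsStableOn {w | 0 < w.im} fun z => (pencil a x z).det := by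
  intro z hz
  refine det_pencil_ne_zero fun v hv => ?_
  rw [inner_pencil] at hv
  have him := congrArg Complex.im hv
  simp only [Complex.add_im, Complex.im_sum, Complex.im_mul_ofReal, Complex.zero_im,
    Complex.ofReal_im, zero_mul, zero_add] at him
  have hinner (k : σ) : ‖inner ℂ (a k) v‖ ^ 2 = 0 := by
    have hk := (Finset.sum_eq_zero_iff_of_nonneg fun k _ =>
      mul_nonneg (hz k).le (sq_nonneg _)).mp him k (Finset.mem_univ k)
    exact (mul_eq_zero.mp hk).resolve_left (hz k).ne'
  simpa [hinner, hx.ne'] using hv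

end Determinant

section CharacteristicPolynomial

open Polynomial

theorem mem_multiaffine_of_eval {σ : Type*} [DecidableEq σ] {P : (σ → ℝ) → ℝ[X]}
    (h : ∀ x, (fun z => (P z).eval x) ∈ multiaffine ℝ σ ℝ) : P ∈ multiaffine ℝ σ ℝ[X] := by
  intro z k s
  refine Polynomial.funext fun x => ?_
  rw [apply_add_single (h x)]
  simp [pderiv_apply]

variable {E : Type*} [NormedAddCommGroup E] [InnerProductSpace ℂ E] [FiniteDimensional ℂ E]

theorem exists_isMonicOfDegree_aeval_eq_det {T : E →ₗ[ℂ] E} (hT : T.IsSymmetric) :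
    ∃ p : ℝ[X], IsMonicOfDegree p (Module.finrank ℂ E) ∧
      ∀ x : ℂ, aeval x p = LinearMap.det (x • 1 + T) := by
  have hneg : (-T).IsSymmetric := by simpa using LinearMap.IsSymmetric.zero.sub hT
  refine ⟨∏ i, (X - C (hneg.eigenvalues rfl i)), ?_, fun x => ?_⟩
  · exact ⟨by simp [natDegree_prod_of_monic, monic_X_sub_C], monic_prod_X_sub_C _ _⟩
  · have := (-T).eval_charpoly x
    rw [hneg.charpoly_eq rfl] at this
    simpa [eval_prod, Algebra.algebraMap_eq_smul_one] using this

-- `Polynomial.aeval_ofReal` is stated with `RCLike.ofReal`, which `rw` does not match here.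
theorem aeval_coe_eq_coe_eval (p : ℝ[X]) (x : ℝ) : aeval (x : ℂ) p = (p.eval x : ℝ) :=
  aeval_ofReal p x

theorem exists_isStableFamily {ι : Type*} [Fintype ι] [DecidableEq ι] (a : ι × Bool → E) :
    ∃ P, IsStableFamily (Module.finrank ℂ E) P ∧
      ∀ z (x : ℂ), aeval x (P z) = (pencil a x (Complex.ofRealHom ∘ z)).det := by
  choose P hmonic hP using fun z =>
    exists_isMonicOfDegree_aeval_eq_det (isSymmetric_pencil a 0 z)
  have hdet (z) (x : ℂ) : aeval x (P z) = (pencil a x (Complex.ofRealHom ∘ z)).det := by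
    rw [hP, ContinuousLinearMap.det]
    congr 1
    ext v
    simp [pencil]
  refine ⟨P, ⟨?_, hmonic, fun x hx => ⟨_, det_pencil_mem_multiaffine a x,
    isStableOn_det_pencil_of_im_pos a hx, fun z => hdet z x⟩⟩, hdet⟩
  exact mem_multiaffine_of_eval fun x =>
    mem_multiaffine_of_ofReal (det_pencil_mem_multiaffine a x) fun z => by
      rw [← hdet, aeval_coe_eq_coe_eval]

theorem isRealStable_of_eq_det_pencil {σ : Type*} [Fintype σ] [DecidableEq σ]
    {φ : (σ → ℝ) → ℝ} (a : σ → E) {x : ℝ} (hx : 0 < x)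
    (hφ : ∀ z, (φ z : ℂ) = (pencil a x (Complex.ofRealHom ∘ z)).det) : IsRealStable φ :=
  ⟨_, det_pencil_mem_multiaffine a x, continuous_det_pencil a x, isStableOn_det_pencil_of_pos a hx,
    hφ⟩

end CharacteristicPolynomial

section BesselSequence

variable {E ι : Type*} [NormedAddCommGroup E] [InnerProductSpace ℂ E]

/-- The vectors `a i` form a Bessel sequence with bound `B`: the operators `∑ aᵢ ⊗ aᵢ` over finite
sets of indices are all at most `B` in the Loewner order. -/
def IsBessel (B : ℝ) (a : ι → E) : Prop :=
  ∀ (s : Finset ι) (v : E), ∑ i ∈ s, ‖inner ℂ (a i) v‖ ^ 2 ≤ B * ‖v‖ ^ 2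

theorem IsBessel.of_univ [Fintype ι] {B : ℝ} {a : ι → E}
    (h : ∀ v, ∑ i, ‖inner ℂ (a i) v‖ ^ 2 ≤ B * ‖v‖ ^ 2) : IsBessel B a := fun _ v =>
  (Finset.sum_le_univ_sum_of_nonneg fun _ => sq_nonneg _).trans (h v)

theorem isBessel_coe_iff {V : Submodule ℂ E} [V.HasOrthogonalProjection] {B : ℝ} (hB : 0 ≤ B)
    {a : ι → V} : IsBessel B (fun i => (a i : E)) ↔ IsBessel B a := by
  refine ⟨fun h s v => h s v, fun h s v => ?_⟩
  simp only [← Submodule.inner_orthogonalProjectionOnto_eq_of_mem_left]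
  refine (h s _).trans (mul_le_mul_of_nonneg_left ?_ hB)
  exact pow_le_pow_left₀ (norm_nonneg _) (V.norm_orthogonalProjectionOnto_apply_le v) 2

theorem IsBessel.comp_injective {κ : Type*} {B : ℝ} {a : ι → E} (ha : IsBessel B a) {e : κ → ι}
    (he : Function.Injective e) : IsBessel B (a ∘ e) := fun s v => by
  simpa using ha (s.map ⟨e, he⟩) v

theorem IsBessel.norm_sum_smul_sq_le {B : ℝ} (hB : 0 ≤ B) {a : ι → E} (ha : IsBessel B a)
    (s : Finset ι) (c : ι → ℂ) : ‖∑ i ∈ s, c i • a i‖ ^ 2 ≤ B * ∑ i ∈ s, ‖c i‖ ^ 2 := by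
  set y := ∑ i ∈ s, c i • a i with hy
  rcases eq_or_ne y 0 with hy0 | hy0
  · rw [hy0, norm_zero, zero_pow two_ne_zero]
    exact mul_nonneg hB (Finset.sum_nonneg fun _ _ => sq_nonneg _)
  have hinner : ‖y‖ ^ 2 ≤ ∑ i ∈ s, ‖c i‖ * ‖inner ℂ (a i) y‖ := by
    calc ‖y‖ ^ 2 = ‖inner ℂ (∑ i ∈ s, c i • a i) y‖ := by
          rw [← hy, inner_self_eq_norm_sq_to_K]
          simp
      _ ≤ ∑ i ∈ s, ‖c i‖ * ‖inner ℂ (a i) y‖ := by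
          rw [sum_inner]
          refine (norm_sum_le _ _).trans_eq (Finset.sum_congr rfl fun i _ => ?_)
          rw [inner_smul_left, norm_mul, RCLike.norm_conj]
  refine le_of_mul_le_mul_right ?_ (pow_pos (norm_pos_iff.mpr hy0) 2)
  calc ‖y‖ ^ 2 * ‖y‖ ^ 2 ≤ (∑ i ∈ s, ‖c i‖ * ‖inner ℂ (a i) y‖) ^ 2 := by
        rw [← pow_two]
        exact pow_le_pow_left₀ (sq_nonneg _) hinner 2
    _ ≤ (∑ i ∈ s, ‖c i‖ ^ 2) * ∑ i ∈ s, ‖inner ℂ (a i) y‖ ^ 2 :=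
        Finset.sum_mul_sq_le_sq_mul_sq s _ _
    _ ≤ (∑ i ∈ s, ‖c i‖ ^ 2) * (B * ‖y‖ ^ 2) :=
        mul_le_mul_of_nonneg_left (ha s y) (Finset.sum_nonneg fun _ _ => sq_nonneg _)
    _ = B * (∑ i ∈ s, ‖c i‖ ^ 2) * ‖y‖ ^ 2 := by ring

theorem IsBessel.norm_sum_rankOne_le {B : ℝ} (hB : 0 ≤ B) {a : ι → E} (ha : IsBessel B a)
    (s : Finset ι) (v : E) : ‖∑ i ∈ s, rankOne (a i) v‖ ≤ B * ‖v‖ := by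
  refine le_of_sq_le_sq ?_ (by positivity)
  calc ‖∑ i ∈ s, rankOne (a i) v‖ ^ 2 ≤ B * ∑ i ∈ s, ‖inner ℂ (a i) v‖ ^ 2 :=
        ha.norm_sum_smul_sq_le hB s _
    _ ≤ B * (B * ‖v‖ ^ 2) := mul_le_mul_of_nonneg_left (ha s v) hB
    _ = (B * ‖v‖) ^ 2 := by ring

theorem IsBessel.summable_rankOne [CompleteSpace E] {B : ℝ} (hB : 0 ≤ B) {a : ι → E}
    (ha : IsBessel B a) (v : E) : Summable fun i => rankOne (a i) v := by
  have hsq : Summable fun i => ‖inner ℂ (a i) v‖ ^ 2 :=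
    summable_of_sum_le (fun _ => sq_nonneg _) fun s => ha s v
  rw [summable_iff_vanishing_norm] at hsq ⊢
  intro η hη
  obtain ⟨s, hs⟩ := hsq (η ^ 2 / (B + 1)) (by positivity)
  refine ⟨s, fun t ht => ?_⟩
  have hsmall := (lt_div_iff₀ (by positivity)).mp ((Real.le_norm_self _).trans_lt (hs t ht))
  refine lt_of_pow_lt_pow_left₀ 2 hη.le ?_
  calc ‖∑ i ∈ t, rankOne (a i) v‖ ^ 2 ≤ B * ∑ i ∈ t, ‖inner ℂ (a i) v‖ ^ 2 :=
        ha.norm_sum_smul_sq_le hB t _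
    _ ≤ (∑ i ∈ t, ‖inner ℂ (a i) v‖ ^ 2) * (B + 1) := by
        linarith [Finset.sum_nonneg fun i (_ : i ∈ t) => sq_nonneg ‖inner ℂ (a i) v‖]
    _ < η ^ 2 := hsmall

theorem IsBessel.exists_hasSum_rankOne [CompleteSpace E] {B : ℝ} (hB : 0 ≤ B) {a : ι → E}
    (ha : IsBessel B a) :
    ∃ T : E →L[ℂ] E, (∀ v, HasSum (fun i => rankOne (a i) v) (T v)) ∧ ‖T‖ ≤ B := by
  have hsum (v) := (ha.summable_rankOne hB v).hasSum
  let T : E →ₗ[ℂ] E :=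
    { toFun v := ∑' i, rankOne (a i) v
      map_add' v w := ((hsum v).add (hsum w)).unique (by simpa using hsum (v + w))|>.symm
      map_smul' c v := ((hsum v).const_smul c).unique (by simpa using hsum (c • v)) |>.symm }
  have hT (v) : ‖T v‖ ≤ B * ‖v‖ :=
    le_of_tendsto (hsum v).norm (Eventually.of_forall fun s => ha.norm_sum_rankOne_le hB s v)
  exact ⟨T.mkContinuous B hT, hsum, T.mkContinuous_norm_le hB hT⟩

theorem isBessel_one_of_tendsto {u : ℕ → E}
    (hu : ∀ v, Tendsto (fun n => ∑ i ∈ Finset.range n, rankOne (u i) v) atTop (nhds v)) :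
    IsBessel 1 u := by
  intro s v
  have hre (t : Finset ℕ) : (inner ℂ v (∑ i ∈ t, rankOne (u i) v)).re
      = ∑ i ∈ t, ‖inner ℂ (u i) v‖ ^ 2 := by
    simp only [inner_sum, inner_rankOne, Complex.re_sum, Complex.ofReal_re]
  have hlim : Tendsto (fun n => ∑ i ∈ Finset.range n, ‖inner ℂ (u i) v‖ ^ 2) atTop
      (nhds (‖v‖ ^ 2)) := by
    have hself : (inner ℂ v v).re = ‖v‖ ^ 2 := inner_self_eq_norm_sq (𝕜 := ℂ) v
    simpa only [Function.comp_def, innerSL_apply_apply, hre, hself] using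
      (Complex.continuous_re.tendsto _).comp (((innerSL ℂ v).continuous.tendsto v).comp (hu v))
  rw [one_mul]
  refine ge_of_tendsto hlim (eventually_atTop.mpr ⟨s.sup id + 1, fun n hn => ?_⟩)
  refine Finset.sum_le_sum_of_subset_of_nonneg (fun i hi => ?_) fun _ _ _ => sq_nonneg _
  exact Finset.mem_range.mpr ((Nat.lt_succ_of_le (Finset.le_sup (f := id) hi)).trans_le hn)

end BesselSequence

section MarcusSpielmanSrivastava

open Polynomial

variable {E : Type*} [NormedAddCommGroup E] [InnerProductSpace ℂ E]

theorem IsBessel.pencil_coercive {σ : Type*} [Fintype σ] {a : σ → E} (ha : IsBessel 1 a) {δ : ℝ}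
    (hδ : 0 ≤ δ) (x : ℝ) {w : σ → ℝ} (hw : (fun _ => -δ) ≤ w) (v : E) :
    (x - δ) * ‖v‖ ^ 2 ≤ (inner ℂ v (pencil a x (Complex.ofRealHom ∘ w) v)).re := by
  have hsum : -δ * ∑ k, ‖inner ℂ (a k) v‖ ^ 2 ≤ ∑ k, w k * ‖inner ℂ (a k) v‖ ^ 2 := by
    rw [Finset.mul_sum]
    exact Finset.sum_le_sum fun k _ => mul_le_mul_of_nonneg_right (hw k) (sq_nonneg _)
  rw [re_inner_pencil]
  linarith [mul_le_mul_of_nonneg_left (ha Finset.univ v) hδ]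

variable [FiniteDimensional ℂ E]

theorem IsBessel.isAboveRoots {ι : Type*} [Fintype ι] [DecidableEq ι] {a : ι × Bool → E}
    (ha : IsBessel 1 a) {ε β δ x : ℝ}
    (hblock : ∀ i, ‖a (i, true)‖ ^ 2 + ‖a (i, false)‖ ^ 2 ≤ ε) (hδ : 0 ≤ δ) (hx : δ < x)
    (hβ : ε ≤ β * (x - δ)) {φ : (ι × Bool → ℝ) → ℝ}
    (hφ : ∀ z, (φ z : ℂ) = (pencil a x (Complex.ofRealHom ∘ z)).det) :
    IsAboveRoots φ β fun _ => -δ := by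
  intro w hw
  have ht : 0 < x - δ := sub_pos.mpr hx
  have hsymm := isSymmetric_pencil a x w
  have hcoer := ha.pencil_coercive hδ x hw
  have hφre (z) : φ z = (pencil a x (Complex.ofRealHom ∘ z)).det.re := by
    rw [← hφ, Complex.ofReal_re]
  have hpos : 0 < φ w := by
    obtain ⟨d, hd, hdet⟩ := exists_pos_det_eq_ofReal hsymm ht hcoer
    rwa [hφre, hdet, Complex.ofReal_re]
  refine ⟨hpos, fun j => ?_⟩
  have hpderiv (k) : pderiv k φ w ≤ ‖a k‖ ^ 2 / (x - δ) * φ w := by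
    have := det_add_rankOne_re_le hsymm ht hcoer (a k)
    rw [pderiv_apply, hφre, hφre, ofRealHom_comp_add_single, Complex.ofReal_one, pencil_add_single,
      one_smul]
    linarith
  calc blockDeriv j φ w ≤ (‖a (j, true)‖ ^ 2 + ‖a (j, false)‖ ^ 2) / (x - δ) * φ w := by
        rw [blockDeriv_apply, add_div, add_mul]
        exact add_le_add (hpderiv _) (hpderiv _)
    _ ≤ β * φ w := by
        refine mul_le_mul_of_nonneg_right ?_ hpos.le
        exact (div_le_iff₀ ht).mpr ((hblock j).trans hβ)

theorem sum_map_single_comp_fst_toList {ι : Type*} [Fintype ι] [DecidableEq ι] (δ : ℝ) :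
    ((Finset.univ : Finset ι).toList.map fun i =>
      (Pi.single i δ ∘ Prod.fst : ι × Bool → ℝ)).sum = fun _ => δ := by
  rw [Finset.sum_map_toList]
  ext k
  simp [Pi.single_apply]

theorem IsBessel.mixed_eval_pos {ι : Type*} [Fintype ι] [DecidableEq ι] {a : ι × Bool → E}
    (ha : IsBessel 1 a) {s : ℝ} (hs : 0 < s)
    (hblock : ∀ i, ‖a (i, true)‖ ^ 2 + ‖a (i, false)‖ ^ 2 ≤ s ^ 2) {P : (ι × Bool → ℝ) → ℝ[X]}
    (hP : ∀ z (x : ℂ), aeval x (P z) = (pencil a x (Complex.ofRealHom ∘ z)).det) {x : ℝ}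
    (hx : (1 + s) ^ 2 ≤ x) : 0 < (mixed Finset.univ.toList P 0).eval x := by
  have hφ (z) : ((leval x ∘ P) z : ℂ) = (pencil a x (Complex.ofRealHom ∘ z)).det := by
    rw [← hP, aeval_coe_eq_coe_eval, Function.comp_apply, leval_apply]
  have hgap : s * (1 + s) ≤ x - (1 + s) := by linarith
  have hstart := ha.isAboveRoots hblock (β := s / (1 + s)) (by linarith : 0 ≤ 1 + s)
    (by nlinarith) (by
      calc s ^ 2 = s / (1 + s) * (s * (1 + s)) := by field_simp
        _ ≤ s / (1 + s) * (x - (1 + s)) := mul_le_mul_of_nonneg_left hgap (by positivity)) hφ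
  have hend := hstart.mixed_apply (isRealStable_of_eq_det_pencil a (by nlinarith) hφ)
    (by linarith : 1 < 1 + s) (by field_simp; simp) Finset.univ.toList
  rw [sum_map_single_comp_fst_toList] at hend
  have := (hend 0 (fun _ => by simp)).1
  rwa [← map_mixed] at this

theorem re_inner_nonneg_of_det_ne_zero {A : E →L[ℂ] E} (hA : A.IsSymmetric)
    (hdet : ∀ t : ℝ, 0 < t → (A + (t : ℂ) • 1).det ≠ 0) (v : E) : 0 ≤ (inner ℂ v (A v)).re := by
  have hpos : 0 ≤ A := by
    rw [StarOrderedRing.nonneg_iff_spectrum_nonneg (R := ℝ) A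
      (ContinuousLinearMap.isSelfAdjoint_iff_isSymmetric.mpr hA)]
    intro t ht
    by_contra! hneg
    let e := (A + ((-t : ℝ) : ℂ) • 1).toContinuousLinearEquivOfDetNeZero (hdet (-t) (by linarith))
    have he : (e : E →L[ℂ] E) = -(algebraMap ℝ (E →L[ℂ] E) t - A) := by
      ext w
      simp [e, Algebra.algebraMap_eq_smul_one]
      abel
    have hunit : IsUnit (e : E →L[ℂ] E) := e.toUnit.isUnit
    exact ht (by rwa [he, IsUnit.neg_iff] at hunit)
  exact (Complex.nonneg_iff.mp
    (((ContinuousLinearMap.nonneg_iff_isPositive A).mp hpos).inner_nonneg_right v)).1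

theorem IsBessel.exists_choice_of_finiteDimensional {ι : Type*} [Finite ι] {a : ι × Bool → E}
    (ha : IsBessel 1 a) {s : ℝ} (hs : 0 < s)
    (hblock : ∀ i, ‖a (i, true)‖ ^ 2 + ‖a (i, false)‖ ^ 2 ≤ s ^ 2) :
    ∃ f : ι → Bool, IsBessel ((1 + s) ^ 2 / 2) fun i => a (i, f i) := by
  classical
  cases nonempty_fintype ι
  obtain ⟨P, hstable, hP⟩ := exists_isStableFamily a
  obtain ⟨f, hf⟩ := hstable.exists_choice_eval_pos Finset.univ.nodup_toList
    fun x hx => ha.mixed_eval_pos hs hblock hP hx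
  refine ⟨f, .of_univ fun v => ?_⟩
  set z : ι × Bool → ℝ :=
    0 + ((Finset.univ : Finset ι).toList.map fun i => Pi.single (i, f i) (-2)).sum with hz
  have hnonneg := re_inner_nonneg_of_det_ne_zero (isSymmetric_pencil a ((1 + s) ^ 2) z)
    (fun t ht => ?_) v
  · have hsum : ∑ k, z k * ‖inner ℂ (a k) v‖ ^ 2 = -2 * ∑ i, ‖inner ℂ (a (i, f i)) v‖ ^ 2 := by
      simp only [hz, Finset.sum_map_toList, zero_add, Finset.sum_apply, Finset.sum_mul]
      rw [Finset.sum_comm, Finset.mul_sum]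
      simp [Pi.single_apply]
    rw [re_inner_pencil, hsum] at hnonneg
    linarith
  · have hx := hf ((1 + s) ^ 2 + t) (by linarith)
    have hpencil : pencil a ((1 + s) ^ 2 : ℝ) (Complex.ofRealHom ∘ z) + (t : ℂ) • 1
        = pencil a ((1 + s) ^ 2 + t : ℝ) (Complex.ofRealHom ∘ z) := by
      rw [pencil, pencil, Complex.ofReal_add, add_smul, add_right_comm]
    rw [hpencil, ← hP, aeval_coe_eq_coe_eval]
    exact Complex.ofReal_ne_zero.mpr hx.ne'

end MarcusSpielmanSrivastava

section Partition

variable {E ι : Type*} [NormedAddCommGroup E] [InnerProductSpace ℂ E]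

theorem IsBessel.exists_choice [Finite ι] {a : ι × Bool → E}
    (ha : IsBessel 1 a) {s : ℝ} (hs : 0 ≤ s)
    (hblock : ∀ i, ‖a (i, true)‖ ^ 2 + ‖a (i, false)‖ ^ 2 ≤ s ^ 2) :
    ∃ f : ι → Bool, IsBessel ((1 + s) ^ 2 / 2) fun i => a (i, f i) := by
  rcases hs.eq_or_lt with rfl | hs
  · have hzero (i) : a (i, true) = 0 := by
      rw [← norm_eq_zero, ← sq_eq_zero_iff]
      nlinarith [hblock i, sq_nonneg ‖a (i, true)‖, sq_nonneg ‖a (i, false)‖]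
    exact ⟨fun _ => true, fun s v => by simp [hzero]⟩
  have : FiniteDimensional ℂ (Submodule.span ℂ (Set.range a)) :=
    FiniteDimensional.span_of_finite ℂ (Set.finite_range a)
  let a' (k : ι × Bool) : Submodule.span ℂ (Set.range a) :=
    ⟨a k, Submodule.subset_span ⟨k, rfl⟩⟩
  have ha' : IsBessel 1 a' := (isBessel_coe_iff zero_le_one).mp ha
  obtain ⟨f, hf⟩ := ha'.exists_choice_of_finiteDimensional hs hblock
  exact ⟨f, (isBessel_coe_iff (a := fun i => a' (i, f i)) (by positivity)).mpr hf⟩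

variable {u : ι → E} {ε : ℝ}

theorem IsBessel.exists_partition_of_finite [Finite ι] (hu : IsBessel 1 u) (hε : 0 ≤ ε)
    (hnorm : ∀ i, ‖u i‖ ^ 2 ≤ ε) :
    ∃ f : ι → Bool, ∀ b, IsBessel (1 / 2 + √(2 * ε) + ε) fun i : {i // f i = b} => u i := by
  cases nonempty_fintype ι
  let a (k : ι × Bool) : PiLp 2 fun _ : Bool => E := PiLp.single 2 k.2 (u k.1)
  have hinner (k v) : inner ℂ (a k) v = inner ℂ (u k.1) (v k.2) := by
    rw [PiLp.inner_apply, Fintype.sum_eq_single k.2 fun b hb => by simp [a, hb]]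
    simp [a]
  have ha : IsBessel 1 a := .of_univ fun v => by
    simp only [hinner, Fintype.sum_prod_type_right, PiLp.norm_sq_eq_of_L2, Finset.mul_sum]
    exact Finset.sum_le_sum fun b _ => hu Finset.univ (v b)
  have hblock (i) : ‖a (i, true)‖ ^ 2 + ‖a (i, false)‖ ^ 2 ≤ √(2 * ε) ^ 2 := by
    rw [Real.sq_sqrt (by positivity), PiLp.norm_single, PiLp.norm_single]
    linarith [hnorm i]
  obtain ⟨f, hf⟩ := ha.exists_choice (Real.sqrt_nonneg _) hblock
  have hconst : (1 + √(2 * ε)) ^ 2 / 2 = 1 / 2 + √(2 * ε) + ε := by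
    linear_combination (Real.sq_sqrt (by positivity : 0 ≤ 2 * ε)) / 2
  rw [hconst] at hf
  refine ⟨f, fun b s v => ?_⟩
  have hsingle (i : {i // f i = b}) :
      inner ℂ (a (i, f i)) (PiLp.single 2 b v) = inner ℂ (u i) v := by simp [hinner, i.2]
  simpa only [Function.comp_apply, hsingle, PiLp.norm_single] using
    hf.comp_injective Subtype.val_injective s (PiLp.single 2 b v)

theorem IsBessel.exists_partition (hu : IsBessel 1 u) (hε : 0 ≤ ε) (hnorm : ∀ i, ‖u i‖ ^ 2 ≤ ε) :
    ∃ f : ι → Bool, ∀ b, IsBessel (1 / 2 + √(2 * ε) + ε) fun i : {i // f i = b} => u i := by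
  choose g hg using fun s : Finset ι =>
    (hu.comp_injective (Subtype.val_injective (p := (· ∈ s)))).exists_partition_of_finite hε
      fun i => hnorm i
  obtain ⟨f, hf⟩ := Finset.rado_selection_subtype (β := fun _ => Bool) g
  refine ⟨f, fun b s v => ?_⟩
  obtain ⟨t, hst, hft⟩ := hf (s.map (.subtype _))
  have hmem (i : s) : (i : ι) ∈ s.map (.subtype _) := Finset.mem_map_of_mem _ i.2
  let e (i : s) : {i : t // g t i = b} :=
    ⟨⟨i, hst (hmem i)⟩, (hft ⟨i, hmem i⟩).symm.trans i.1.2⟩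
  have he : Function.Injective e := fun i j hij =>
    Subtype.ext (Subtype.ext (congrArg (fun k => (k.1.1 : ι)) hij))
  rw [← Finset.sum_coe_sort]
  exact (hg t b).comp_injective he Finset.univ v

end Partition

theorem stmt6_general {H ι : Type*} [NormedAddCommGroup H] [InnerProductSpace ℂ H]
    [CompleteSpace H] {ε : ℝ} (hε : 0 ≤ ε) {u : ι → H} (hu : IsBessel 1 u)
    (hnorm : ∀ i, ‖u i‖ ^ 2 ≤ ε) :
    ∃ (f : ι → Bool) (T : Bool → H →L[ℂ] H), ∀ b,
      (∀ v, HasSum (fun i : {i // f i = b} => rankOne (u i) v) (T b v)) ∧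
      ‖T b‖ ≤ 1 / 2 + √(2 * ε) + ε := by
  obtain ⟨f, hf⟩ := hu.exists_partition hε hnorm
  choose T hT using fun b => (hf b).exists_hasSum_rankOne (by positivity)
  exact ⟨f, T, hT⟩

theorem tendsto_sum_filter_range_of_hasSum {M : Type*} [AddCommMonoid M] [TopologicalSpace M]
    {p : ℕ → Prop} [DecidablePred p] {g : ℕ → M} {m : M}
    (h : HasSum (fun i : {i // p i} => g i) m) :
    Tendsto (fun n => ∑ i ∈ (Finset.range n).filter p, g i) atTop (nhds m) := by
  simpa only [Finset.sum_filter, Set.indicator_apply, Set.mem_ofPred_eq] using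
    ((hasSum_subtype_iff_indicator (s := {i | p i})).mp h).tendsto_sum_nat

/-- **Marcus–Spielman–Srivastava, infinite-dimensional version.** If `(uᵢ)` is a sequence
of vectors in a complex Hilbert space `H` with `∑ᵢ uᵢ ⊗ uᵢ = I` (partial sums converging
in the strong operator topology) and `‖uᵢ‖² ≤ ε` for all `i`, then `ℕ` can be partitioned
into two sets (encoded by a boolean function `f`) on each of which the sum of the rank-one
operators `uᵢ ⊗ uᵢ` exists in the strong operator topology and has operator norm at most
`1/2 + √(2ε) + ε`. -/
theorem stmt6 {H : Type*} [NormedAddCommGroup H] [InnerProductSpace ℂ H] [CompleteSpace H]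
    (ε : ℝ) (u : ℕ → H)
    (hsum : ∀ v : H,
      Tendsto (fun n => ∑ i ∈ Finset.range n, rankOne (u i) v) atTop (nhds v))
    (hnorm : ∀ i, ‖u i‖ ^ 2 ≤ ε) :
    ∃ (f : ℕ → Bool) (T : Bool → H →L[ℂ] H),
      ∀ b : Bool,
        (∀ v : H,
          Tendsto (fun n => ∑ i ∈ (Finset.range n).filter (fun i => f i = b),
            rankOne (u i) v) atTop (nhds (T b v))) ∧
        ‖T b‖ ≤ 1 / 2 + Real.sqrt (2 * ε) + ε := by
  obtain ⟨f, T, hT⟩ :=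
    stmt6_general ((sq_nonneg _).trans (hnorm 0)) (isBessel_one_of_tendsto hsum) hnorm
  exact ⟨f, T, fun b => ⟨fun v => tendsto_sum_filter_range_of_hasSum ((hT b).1 v), (hT b).2⟩⟩
end
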